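/- For each 0 < ε₁, ε₂ < 1 the following holds for all sufficiently large K. For d > 0, let G be an n-vertex bipartite (ε₁, ε₂·d)-expander with minimum degree δ(G) ≥ d and n ≥ K·d, and set m := ⌊log⁴(n/d)⌋. Suppose d ≥ m^{200} and G contains no copy of TK_{√d·m}^(1). Then for every W ⊆ V(G) with |W| ≤ d·m^{11}, there exists a (50m, 1)-adjuster P = (u₁, u₂, F₁, F₂, 3, A, 𝒫) in G − W; moreover, |A| ≤ 2·ℓ(P). -/

import Mathlib

open scoped BigOperators

/-- The average degree of a graph `G`: `(1/|G|) * sum of degrees`. -/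
noncomputable def avgDeg {V : Type*} (G : SimpleGraph V) : Real :=
  (finsum fun v : V => ((G.neighborSet v).ncard : Real)) / (Nat.card V : Real)

/-- The function `eps(x, eps1, k)` from the definition of robust sublinear expanders. -/
noncomputable def epsFun (eps1 k x : Real) : Real :=
  if x < k / 5 then 0 else eps1 / (Real.log (15 * x / k)) ^ 2

/-- The external neighbourhood of a vertex set `X` in a graph `H`. -/
def extNbr {V : Type*} (H : SimpleGraph V) (X : Set V) : Set V :=
  {w : V | w ∉ X ∧ ∃ v ∈ X, H.Adj v w}

/-- `G` is an `(eps1, k)`-robust-expander. -/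
def IsExpander {V : Type*} (G : SimpleGraph V) (eps1 k : Real) : Prop :=
  ∀ X : Set V, k / 2 ≤ (X.ncard : Real) → (X.ncard : Real) ≤ (Nat.card V : Real) / 2 →
    ∀ F : SimpleGraph V, F ≤ G →
      (F.edgeSet.ncard : Real) ≤ avgDeg G * epsFun eps1 k (X.ncard) * (X.ncard : Real) →
      epsFun eps1 k (X.ncard) * (X.ncard : Real) ≤ ((extNbr (G \ F) X).ncard : Real)

/-- The minimum degree of `G` is at least `d`. -/
def minDegGe {V : Type*} (G : SimpleGraph V) (d : Real) : Prop :=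
  ∀ v : V, d ≤ ((G.neighborSet v).ncard : Real)

/-- `G` is bipartite with parts `A` and its complement. -/
def IsBipartiteWith {V : Type*} (G : SimpleGraph V) (A : Set V) : Prop :=
  ∀ ⦃v w : V⦄, G.Adj v w → (v ∈ A ↔ w ∉ A)

/-- `G` is bipartite. -/
def IsBipartite {V : Type*} (G : SimpleGraph V) : Prop :=
  ∃ A : Set V, IsBipartiteWith G A

/-- `S` is the vertex set of a copy of `TK_t^(l)` in `G`: a balanced subdivision of the
complete graph `K_t` in which each edge is replaced by a path with `l` internal vertices
(i.e. of length `l + 1`); the paths are pairwise internally vertex disjoint. -/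
def IsTK {V : Type*} (G : SimpleGraph V) (t l : Nat) (S : Set V) : Prop :=
  ∃ b : Fin t → V, Function.Injective b ∧
    ∃ P : ∀ i j : Fin t, i < j → G.Walk (b i) (b j),
      (∀ i j (h : i < j), (P i j h).IsPath) ∧
      (∀ i j (h : i < j), (P i j h).length = l + 1) ∧
      (∀ i j (h : i < j), ∀ i' j' (h' : i' < j'), (i, j) ≠ (i', j') →
        ∀ v : V, v ∈ (P i j h).support → v ∈ (P i' j' h').support →
          (v = b i ∨ v = b j) ∧ (v = b i' ∨ v = b j')) ∧
      S = {v : V | ∃ (i j : Fin t) (h : i < j), v ∈ (P i j h).support}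

/-- `G` contains a copy of `TK_t^(l)`. -/
def HasTK {V : Type*} (G : SimpleGraph V) (t l : Nat) : Prop :=
  ∃ S : Set V, IsTK G t l S

/-- An `(h₀, h₁, L)`-unit in `G`: a core vertex, `h₀` pairwise vertex disjoint `h₁`-stars
with centres `centre i` and leaves `leaf i j`, together with core-centre paths, pairwise
internally vertex disjoint and disjoint from the stars, all of the same length `< L`. -/
structure UnitIn {V : Type*} (G : SimpleGraph V) (h₀ h₁ L : Nat) where
  core : V
  centre : Fin h₀ → V
  leaf : Fin h₀ → Fin h₁ → V
  path : ∀ i : Fin h₀, G.Walk core (centre i)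
  pathLen : Nat
  pathLen_pos : 0 < pathLen
  pathLen_lt : pathLen < L
  path_isPath : ∀ i, (path i).IsPath
  path_length : ∀ i, (path i).length = pathLen
  star_adj : ∀ i j, G.Adj (centre i) (leaf i j)
  centre_inj : Function.Injective centre
  leaf_inj : Function.Injective fun p : Fin h₀ × Fin h₁ => leaf p.1 p.2
  centre_ne_leaf : ∀ i j k, centre i ≠ leaf j k
  paths_disjoint : ∀ i j, i ≠ j →
    ∀ x : V, x ∈ (path i).support → x ∈ (path j).support → x = core
  leaf_notin_path : ∀ i j k, leaf j k ∉ (path i).support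

namespace UnitIn

variable {V : Type*} {G : SimpleGraph V} {h₀ h₁ L : Nat}

/-- The interior of a unit: the union of the vertex sets of its core-centre paths. -/
def interior (U : UnitIn G h₀ h₁ L) : Set V :=
  {x : V | ∃ i, x ∈ (U.path i).support}

/-- The vertex set of a unit. -/
def verts (U : UnitIn G h₀ h₁ L) : Set V :=
  U.interior ∪ Set.range fun p : Fin h₀ × Fin h₁ => U.leaf p.1 p.2

/-- The boundary of a unit. -/
def boundary (U : UnitIn G h₀ h₁ L) : Set V :=
  U.verts \ U.interior

end UnitIn

/-- An `(l, k)`-adjuster in `G` (relative to `d` and `m`): two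
`(z·√d·m⁶, √d·m²², 10m)`-units `F₁`, `F₂` with disjoint interiors, `z ∈ [1,3]`, a vertex
set `A` of size at most `2l` disjoint from the units, and `k + 1` paths between the two
core vertices inside `A ∪ {cores}` whose lengths are `l', l' + 2, …, l' + 2k` with `l' ≤ l`. -/
structure AdjusterIn {V : Type*} (G : SimpleGraph V) (d : Real) (m l k : Nat) where
  z : Real
  z_ge : 1 ≤ z
  z_le : z ≤ 3
  F₁ : UnitIn G ⌈z * Real.sqrt d * (m : Real) ^ 6⌉₊ ⌈Real.sqrt d * (m : Real) ^ 22⌉₊ (10 * m)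
  F₂ : UnitIn G ⌈z * Real.sqrt d * (m : Real) ^ 6⌉₊ ⌈Real.sqrt d * (m : Real) ^ 22⌉₊ (10 * m)
  int_disj : F₁.interior ∩ F₂.interior = ∅
  A : Set V
  A_card : A.ncard ≤ 2 * l
  A_disj : A ∩ (F₁.verts ∪ F₂.verts) = ∅
  l' : Nat
  l'_le : l' ≤ l
  paths : Fin (k + 1) → G.Walk F₁.core F₂.core
  paths_isPath : ∀ i, (paths i).IsPath
  paths_length : ∀ i : Fin (k + 1), (paths i).length = l' + 2 * (i : Nat)
  paths_support : ∀ i, ∀ x ∈ (paths i).support, x ∈ A ∪ {F₁.core, F₂.core}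

namespace AdjusterIn

variable {V : Type*} {G : SimpleGraph V} {d : Real} {m l k : Nat}

/-- The length `ℓ(P) = l' + 2k` of an adjuster. -/
def len (P : AdjusterIn G d m l k) : Nat := P.l' + 2 * k

/-- The perimeter `p(P) = A ∪ int(F₁) ∪ int(F₂)` of an adjuster. -/
def perimeter (P : AdjusterIn G d m l k) : Set V :=
  P.A ∪ P.F₁.interior ∪ P.F₂.interior

/-- The full vertex set of an adjuster. -/
def verts (P : AdjusterIn G d m l k) : Set V :=
  P.A ∪ P.F₁.verts ∪ P.F₂.verts

end AdjusterIn

/-!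
Dependent random choice shows that, in a graph without `TK_t^(1)`, a set `W` of moderate size
captures a constant proportion of the neighbourhood of only few vertices; so `G` stays dense after
the deletion of any such `W`. Inside what remains, a Moore-type count yields short *detours* (two
vertices joined by two paths whose lengths differ by two, each vertex carrying a large star), and
one can pick greedily many disjoint detours together with still more disjoint stars, all avoiding
`W`.

By expansion, any two large vertex sets are joined by a short path that avoids a given smaller set.
A maximal system of such links between leaves of the detours and leaves of the other stars therefore
leaves few detour ends with too few links. Hence some detour has both ends saturated: each end is
then the core of a unit, and the two paths of the detour turn the pair of units into an adjuster.
-/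

section DependentRandomChoice

open Finset

variable {α β : Type*} (r : α → β → Prop) [∀ v w, Decidable (r v w)] {U : Finset α} {W : Finset β}

theorem sum_card_filter_forall_eq_sum_pow (U : Finset α) (W : Finset β) (p : ℕ) :
    ∑ f ∈ Fintype.piFinset fun _ : Fin p => U, #{w ∈ W | ∀ i, r (f i) w} =
      ∑ w ∈ W, #{v ∈ U | r v w} ^ p := by
  classical
  refine (sum_card_bipartiteAbove_eq_sum_card_bipartiteBelow
    fun (f : Fin p → α) w => ∀ i, r (f i) w).trans (sum_congr rfl fun w _ => ?_)
  have : (Fintype.piFinset fun _ : Fin p => U).bipartiteBelow (fun f w => ∀ i, r (f i) w) w =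
      Fintype.piFinset fun _ : Fin p => {v ∈ U | r v w} := by
    ext f
    simp [bipartiteBelow, forall_and]
  rw [this, Fintype.card_piFinset_const]

theorem card_mul_pow_le_pow_mul_sum_pow {s : Finset α} {f : α → ℕ} {a b : ℕ}
    (h : #s * a ≤ b * ∑ i ∈ s, f i) (p : ℕ) : #s * a ^ p ≤ b ^ p * ∑ i ∈ s, f i ^ p := by
  obtain rfl | hs := s.eq_empty_or_nonempty
  · simp
  obtain _ | p := p
  · simp
  have hmean : (∑ i ∈ s, (f i : ℝ)) ^ (p + 1) ≤ (∑ i ∈ s, (f i : ℝ) ^ (p + 1)) * #s ^ p :=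
    (div_le_iff₀ (by positivity)).1 (pow_sum_div_card_le_sum_pow (fun i _ => (f i).cast_nonneg) p)
  refine Nat.le_of_mul_le_mul_left ?_ (pow_pos hs.card_pos p)
  calc #s ^ p * (#s * a ^ (p + 1)) = (#s * a) ^ (p + 1) := by ring
    _ ≤ (b * ∑ i ∈ s, f i) ^ (p + 1) := by gcongr
    _ = b ^ (p + 1) * (∑ i ∈ s, f i) ^ (p + 1) := mul_pow ..
    _ ≤ b ^ (p + 1) * ((∑ i ∈ s, f i ^ (p + 1)) * #s ^ p) := by gcongr; exact_mod_cast hmean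
    _ = #s ^ p * (b ^ (p + 1) * ∑ i ∈ s, f i ^ (p + 1)) := by ring

theorem sum_card_filter_lt_le (U : Finset α) (W : Finset β) (p c : ℕ) :
    ∑ f ∈ Fintype.piFinset fun _ : Fin p => U,
        #{z ∈ W.offDiag | #{v ∈ U | r v z.1 ∧ r v z.2} < c ∧ ∀ i, r (f i) z.1 ∧ r (f i) z.2} ≤
      #W ^ 2 * c ^ p := by
  have hpairs := sum_card_filter_forall_eq_sum_pow (fun v (z : β × β) => r v z.1 ∧ r v z.2) U
    {z ∈ W.offDiag | #{v ∈ U | r v z.1 ∧ r v z.2} < c} p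
  simp only [filter_filter] at hpairs
  rw [hpairs]
  calc _ ≤ ∑ z ∈ W.offDiag with #{v ∈ U | r v z.1 ∧ r v z.2} < c, c ^ p :=
        sum_le_sum fun z hz => Nat.pow_le_pow_left (mem_filter.1 hz).2.le p
    _ ≤ #W.offDiag * c ^ p := by
        rw [sum_const, smul_eq_mul]
        gcongr
        exact filter_subset ..
    _ ≤ #W ^ 2 * c ^ p := by
        rw [offDiag_card, sq]
        gcongr
        exact Nat.sub_le ..

theorem card_mul_card_pow_le_pow_mul_sum (p : ℕ) {b : ℕ}
    (hdeg : ∀ v ∈ U, #W ≤ b * #{w ∈ W | r v w}) :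
    #W * #U ^ p ≤
      b ^ p * ∑ f ∈ Fintype.piFinset fun _ : Fin p => U, #{w ∈ W | ∀ i, r (f i) w} := by
  rw [sum_card_filter_forall_eq_sum_pow]
  refine card_mul_pow_le_pow_mul_sum_pow ?_ p
  calc #W * #U = ∑ _ ∈ U, #W := by rw [sum_const, smul_eq_mul, mul_comm]
    _ ≤ b * ∑ v ∈ U, #{w ∈ W | r v w} := by rw [mul_sum]; exact sum_le_sum hdeg
    _ = b * ∑ w ∈ W, #{v ∈ U | r v w} :=
        congrArg (b * ·) (sum_card_bipartiteAbove_eq_sum_card_bipartiteBelow r)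

-- A uniformly random `p`-tuple from `U` has many common neighbours in `W`, few of which lie in a
-- pair with fewer than `c` common neighbours in `U`; discard one vertex of each such pair.
theorem exists_subset_forall_le_card_common_of_pow (hU : U.Nonempty) {b c t p : ℕ} (hb : 0 < b)
    (hdeg : ∀ v ∈ U, #W ≤ b * #{w ∈ W | r v w})
    (hnum : (#W ^ 2 * c ^ p + t * #U ^ p) * b ^ p ≤ #W * #U ^ p) :
    ∃ S ⊆ W, t ≤ #S ∧ ∀ x ∈ S, ∀ y ∈ S, x ≠ y → c ≤ #{v ∈ U | r v x ∧ r v y} := by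
  classical
  let common (f : Fin p → α) : Finset β := {w ∈ W | ∀ i, r (f i) w}
  let bad (f : Fin p → α) : Finset (β × β) :=
    {z ∈ W.offDiag | #{v ∈ U | r v z.1 ∧ r v z.2} < c ∧ ∀ i, r (f i) z.1 ∧ r (f i) z.2}
  have hsum : ∑ f ∈ Fintype.piFinset fun _ : Fin p => U, (t + #(bad f)) ≤
      ∑ f ∈ Fintype.piFinset fun _ : Fin p => U, #(common f) := by
    rw [sum_add_distrib, sum_const, Fintype.card_piFinset_const, smul_eq_mul]
    refine Nat.le_of_mul_le_mul_left ?_ (pow_pos hb p)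
    calc b ^ p * (#U ^ p * t + ∑ f ∈ _, #(bad f)) ≤ b ^ p * (#U ^ p * t + #W ^ 2 * c ^ p) := by
          gcongr; exact sum_card_filter_lt_le r U W p c
      _ = (#W ^ 2 * c ^ p + t * #U ^ p) * b ^ p := by ring
      _ ≤ #W * #U ^ p := hnum
      _ ≤ _ := card_mul_card_pow_le_pow_mul_sum r p hdeg
  obtain ⟨f, -, hf⟩ := exists_le_of_sum_le
    (Fintype.piFinset_nonempty.2 fun _ => hU : (Fintype.piFinset fun _ : Fin p => U).Nonempty) hsum
  refine ⟨common f \ (bad f).image Prod.fst, sdiff_subset.trans (filter_subset ..), ?_, ?_⟩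
  · have := le_card_sdiff ((bad f).image Prod.fst) (common f)
    have : #((bad f).image Prod.fst) ≤ #(bad f) := card_image_le
    lia
  · intro x hx y hy hxy
    by_contra! hlt
    simp only [mem_sdiff, mem_image, common, bad, mem_filter, mem_offDiag] at hx hy
    exact hx.2 ⟨(x, y), ⟨⟨hx.1.1, hy.1.1, hxy⟩, hlt, fun i => ⟨hx.1.2 i, hy.1.2 i⟩⟩, rfl⟩

-- `p` is chosen so that `b ^ (2 * q * (p - 1)) ≤ w ^ 2 < b ^ (2 * q * p)`.
theorem exists_pow_add_mul_pow_mul_pow_le {u w b c t q : ℕ} (hb : 1 < b) (hq : q ≠ 0) (hw : w ≠ 0)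
    (hu : c * b ^ (2 * q) ≤ u) (ht : ((t + 1) * b) ^ q ≤ w ^ (q - 1)) :
    ∃ p, (w ^ 2 * c ^ p + t * u ^ p) * b ^ p ≤ w * u ^ p := by
  set B := b ^ (2 * q) with hB
  have hB1 : 1 < B := Nat.one_lt_pow (by lia) hb
  set k := Nat.log B (w ^ 2)
  have hlow : (b ^ k) ^ q ≤ w := by
    refine (Nat.pow_le_pow_iff_left two_ne_zero).1 ?_
    calc ((b ^ k) ^ q) ^ 2 = B ^ k := by rw [hB]; ring
      _ ≤ w ^ 2 := Nat.pow_log_le_self B (by positivity)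
  have hhigh : w ^ 2 * c ^ (k + 1) ≤ u ^ (k + 1) :=
    calc w ^ 2 * c ^ (k + 1) ≤ B ^ (k + 1) * c ^ (k + 1) := by
          exact Nat.mul_le_mul_right _ (Nat.lt_pow_succ_log_self hB1 _).le
      _ = (c * B) ^ (k + 1) := by ring
      _ ≤ u ^ (k + 1) := by gcongr
  have hbt : (t + 1) * b ^ (k + 1) ≤ w := by
    refine (Nat.pow_le_pow_iff_left hq).1 ?_
    calc ((t + 1) * b ^ (k + 1)) ^ q = ((t + 1) * b) ^ q * (b ^ k) ^ q := by
          rw [← mul_pow, pow_succ', mul_assoc]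
      _ ≤ w ^ (q - 1) * w := by gcongr
      _ = w ^ q := pow_sub_one_mul hq w
  refine ⟨k + 1, ?_⟩
  calc (w ^ 2 * c ^ (k + 1) + t * u ^ (k + 1)) * b ^ (k + 1)
      ≤ (u ^ (k + 1) + t * u ^ (k + 1)) * b ^ (k + 1) := by gcongr
    _ = (t + 1) * b ^ (k + 1) * u ^ (k + 1) := by ring
    _ ≤ w * u ^ (k + 1) := by gcongr

theorem exists_subset_forall_le_card_common (hU : U.Nonempty) {b c t q : ℕ} (hb : 1 < b)
    (hq : q ≠ 0) (hW : W.Nonempty) (hdeg : ∀ v ∈ U, #W ≤ b * #{w ∈ W | r v w})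
    (hc : c * b ^ (2 * q) ≤ #U) (ht : ((t + 1) * b) ^ q ≤ #W ^ (q - 1)) :
    ∃ S ⊆ W, t ≤ #S ∧ ∀ x ∈ S, ∀ y ∈ S, x ≠ y → c ≤ #{v ∈ U | r v x ∧ r v y} := by
  obtain ⟨p, hp⟩ := exists_pow_add_mul_pow_mul_pow_le hb hq hW.card_pos.ne' hc ht
  exact exists_subset_forall_le_card_common_of_pow r hU (by lia) hdeg hp

end DependentRandomChoice

section Subdivisions

open Finset SimpleGraph

variable {V : Type*} {G : SimpleGraph V} {t : ℕ}

theorem exists_injective_mem_of_card_le {ι α : Type*} [Fintype ι] (s : ι → Finset α)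
    (hs : ∀ i, Fintype.card ι ≤ #(s i)) : ∃ x : ι → α, Function.Injective x ∧ ∀ i, x i ∈ s i := by
  classical
  refine (all_card_le_biUnion_card_iff_exists_injective s).1 fun I => ?_
  obtain rfl | ⟨i, hi⟩ := I.eq_empty_or_nonempty
  · simp
  · exact ((card_le_univ I).trans (hs i)).trans (card_le_card (subset_biUnion_of_mem s hi))

theorem hasTK_one_of_middle {b : Fin t → V} (hb : Function.Injective b)
    {x : {z : Fin t × Fin t // z.1 < z.2} → V} (hx : Function.Injective x)
    (hxb : ∀ z i, x z ≠ b i) (hadj : ∀ z, G.Adj (x z) (b z.1.1) ∧ G.Adj (x z) (b z.1.2)) :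
    HasTK G t 1 := by
  refine ⟨_, b, hb, fun i j hij => .cons (hadj ⟨(i, j), hij⟩).1.symm
    (.cons (hadj ⟨(i, j), hij⟩).2 .nil), fun i j hij => ?_, fun i j hij => rfl, ?_, rfl⟩
  · have := hb.ne hij.ne
    have := hxb ⟨(i, j), hij⟩
    simp_all [eq_comm]
  · intro i j hij i' j' hij' hne v hv hv'
    have : x ⟨(i, j), hij⟩ ≠ x ⟨(i', j'), hij'⟩ := hx.ne fun h => hne (congrArg Subtype.val h)
    have := hxb ⟨(i, j), hij⟩
    have := hxb ⟨(i', j'), hij'⟩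
    simp only [Walk.support_cons, Walk.support_nil, List.mem_cons, List.not_mem_nil,
      or_false] at hv hv'
    grind

variable [DecidableRel G.Adj] {U W : Finset V} {b q D : ℕ}

theorem hasTK_one_of_card_common (hUW : Disjoint U W) (hW : t ≤ #W)
    (h : ∀ x ∈ W, ∀ y ∈ W, x ≠ y → t ^ 2 ≤ #{v ∈ U | G.Adj v x ∧ G.Adj v y}) :
    HasTK G t 1 := by
  obtain ⟨S, hSW, hS⟩ := exists_subset_card_eq hW
  let b : Fin t → V := fun i => (S.equivFinOfCardEq hS).symm i
  have hb : Function.Injective b := Subtype.val_injective.comp (Equiv.injective _)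
  have hbW : ∀ i, b i ∈ W := fun i => hSW ((S.equivFinOfCardEq hS).symm i).2
  obtain ⟨x, hx, hxU⟩ := exists_injective_mem_of_card_le
    (fun z : {z : Fin t × Fin t // z.1 < z.2} =>
      {v ∈ U | G.Adj v (b z.1.1) ∧ G.Adj v (b z.1.2)}) fun z => by
    refine le_trans ((Fintype.card_subtype_le _).trans_eq ?_)
      (h _ (hbW z.1.1) _ (hbW z.1.2) (hb.ne z.2.ne))
    simp [sq]
  exact hasTK_one_of_middle hb hx
    (fun z i => disjoint_iff_ne.1 hUW _ (mem_filter.1 (hxU z)).1 _ (hbW i))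
    fun z => (mem_filter.1 (hxU z)).2

theorem card_lt_of_not_hasTK (hTK : ¬ HasTK G t 1) (hUW : Disjoint U W) (hb : 1 < b) (hq : q ≠ 0)
    (hD : 0 < D) (hdeg : ∀ v ∈ U, D ≤ #{w ∈ W | G.Adj v w}) (hW : #W ≤ b * D)
    (ht : ((t + 1) * b) ^ q ≤ D ^ (q - 1)) : #U < t ^ 2 * b ^ (2 * q) := by
  by_contra! hU
  have ht0 : t ≠ 0 := by
    rintro rfl
    exact hTK (hasTK_one_of_card_common (disjoint_empty_left ∅) le_rfl (by simp))
  have hU0 : U.Nonempty := card_pos.1 (hU.trans_lt' (by positivity))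
  have hDW : D ≤ #W := hU0.elim fun v hv => (hdeg v hv).trans (card_filter_le ..)
  obtain ⟨S, hSW, hS, hcommon⟩ := exists_subset_forall_le_card_common (fun v w => G.Adj v w) hU0 hb
    hq (card_pos.1 (hD.trans_le hDW)) (fun v hv => hW.trans (Nat.mul_le_mul_left b (hdeg v hv)))
    hU (ht.trans (Nat.pow_le_pow_left hDW _))
  exact hTK (hasTK_one_of_card_common (disjoint_of_subset_right hSW hUW) hS hcommon)

end Subdivisions

section RobustDensity

open Finset SimpleGraph

variable {V : Type*} {G : SimpleGraph V} [DecidableRel G.Adj] {δ : ℕ}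

theorem sum_card_filter_adj_eq_sum_erase_add [DecidableEq V] {T : Finset V} {v : V} (hv : v ∈ T) :
    ∑ x ∈ T, #{w ∈ T | G.Adj x w} =
      ∑ x ∈ T.erase v, #{w ∈ T.erase v | G.Adj x w} + 2 * #{w ∈ T | G.Adj v w} := by
  have hsplit : ∀ x, #{w ∈ T | G.Adj x w} =
      #{w ∈ T.erase v | G.Adj x w} + if G.Adj v x then 1 else 0 := fun x => by
    simp only [card_filter, ← sum_erase_add T _ hv, G.adj_comm v x]
  have hnbr : ∑ x ∈ T.erase v, (if G.Adj v x then 1 else 0) = #{w ∈ T | G.Adj v w} := by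
    rw [hsplit v, card_filter, if_neg (G.loopless.irrefl v), add_zero]
  rw [← sum_erase_add T _ hv, sum_congr rfl fun x _ => hsplit x, sum_add_distrib, hnbr]
  ring

theorem exists_subset_forall_le_card_filter_adj {T₀ : Finset V} (hT₀ : T₀.Nonempty)
    (hsum : 2 * δ * #T₀ ≤ ∑ v ∈ T₀, #{w ∈ T₀ | G.Adj v w}) :
    ∃ T ⊆ T₀, T.Nonempty ∧ ∀ v ∈ T, δ ≤ #{w ∈ T | G.Adj v w} := by
  classical
  induction T₀ using Finset.strongInduction with
  | H T₀ ih =>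
    by_cases hT : ∀ v ∈ T₀, δ ≤ #{w ∈ T₀ | G.Adj v w}
    · exact ⟨T₀, subset_rfl, hT₀, hT⟩
    · push Not at hT
      obtain ⟨v, hv, hlt⟩ := hT
      have herase := sum_card_filter_adj_eq_sum_erase_add (G := G) hv
      have hcard : 2 * δ * #T₀ = 2 * δ * #(T₀.erase v) + 2 * δ := by
        rw [← card_erase_add_one hv]; ring
      have hne : (T₀.erase v).Nonempty := by
        by_contra! h0
        have hT₀ : T₀ = {v} := by simpa [h0] using (insert_erase hv).symm
        subst hT₀
        simp at hsum
        lia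
      obtain ⟨T, hT, h⟩ := ih _ (erase_ssubset hv) hne (by lia)
      exact ⟨T, hT.trans (erase_subset ..), h⟩

/-- `G` stays dense after deleting few vertices: outside any set of at most `B` vertices there is a
nonempty set inducing a subgraph of minimum degree at least `δ`. -/
def RobustlyDense (G : SimpleGraph V) [DecidableRel G.Adj] (B δ : ℕ) : Prop :=
  ∀ W : Finset V, #W ≤ B → ∃ T : Finset V, T.Nonempty ∧ Disjoint T W ∧
    ∀ v ∈ T, δ ≤ #{w ∈ T | G.Adj v w}

theorem robustlyDense_of_not_hasTK [Fintype V] {B b t q : ℕ} (hTK : ¬ HasTK G t 1) (hb : 1 < b)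
    (hq : q ≠ 0) (hδ : 0 < δ) (hdeg : ∀ v, 8 * δ ≤ G.degree v) (hB : B ≤ b * (4 * δ))
    (ht : ((t + 1) * b) ^ q ≤ (4 * δ) ^ (q - 1)) (hBV : 4 * B ≤ Fintype.card V)
    (htV : 4 * (t ^ 2 * b ^ (2 * q)) ≤ Fintype.card V) : RobustlyDense G B δ := by
  classical
  intro W hW
  set U : Finset V := {v ∈ Wᶜ | 4 * δ ≤ #{w ∈ W | G.Adj v w}}
  have hU : #U < t ^ 2 * b ^ (2 * q) :=
    card_lt_of_not_hasTK hTK (disjoint_left.2 fun v hv => mem_compl.1 (mem_filter.1 hv).1) hb hq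
      (by lia) (fun v hv => (mem_filter.1 hv).2) (hW.trans hB) ht
  have hWc : #Wᶜ = Fintype.card V - #W := card_compl W
  have hhalf : #Wᶜ ≤ 2 * #(Wᶜ \ U) := by
    have := card_sdiff_add_card_eq_card (filter_subset _ _ : U ⊆ Wᶜ)
    lia
  have hout : ∀ v ∈ Wᶜ \ U, 4 * δ ≤ #{w ∈ Wᶜ | G.Adj v w} := fun v hv => by
    have hsplit : #{w ∈ W | G.Adj v w} + #{w ∈ Wᶜ | G.Adj v w} = G.degree v := by
      rw [← G.card_neighborFinset_eq_degree, G.neighborFinset_eq_filter, card_filter, card_filter,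
        card_filter, sum_add_sum_compl]
    have := hdeg v
    have : ¬ 4 * δ ≤ #{w ∈ W | G.Adj v w} := fun h =>
      (mem_sdiff.1 hv).2 (mem_filter.2 ⟨(mem_sdiff.1 hv).1, h⟩)
    lia
  obtain ⟨T, hT, hTne, hdegT⟩ := exists_subset_forall_le_card_filter_adj (G := G) (δ := δ)
    (card_pos.1 (by lia) : Wᶜ.Nonempty) <|
    calc 2 * δ * #Wᶜ ≤ 2 * δ * (2 * #(Wᶜ \ U)) := by gcongr
      _ = ∑ v ∈ Wᶜ \ U, 4 * δ := by rw [sum_const, smul_eq_mul]; ring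
      _ ≤ ∑ v ∈ Wᶜ \ U, #{w ∈ Wᶜ | G.Adj v w} := sum_le_sum hout
      _ ≤ ∑ v ∈ Wᶜ, #{w ∈ Wᶜ | G.Adj v w} := sum_le_sum_of_subset sdiff_subset
  exact ⟨T, hTne, disjoint_left.2 fun v hv => mem_compl.1 (hT hv), hdegT⟩

end RobustDensity

section MooreBound

open Finset SimpleGraph

variable {V : Type*} {G : SimpleGraph V} {k m : ℕ}

theorem walk_eq_of_lt_egirth (hg : (2 * m : ℕ) < G.egirth) {u v : V} {p q : G.Walk u v}
    (hp : p.IsPath) (hq : q.IsPath) (hpm : p.length ≤ m) (hqm : q.length ≤ m) : p = q := by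
  by_contra hne
  obtain ⟨u', v', p', q', hp', hq', hc⟩ := hp.exists_isCycle_of_ne hq hne
  refine hg.not_ge ((egirth_le_length hc).trans (Nat.cast_le.2 ?_))
  rw [Walk.length_append, Walk.length_reverse]
  have := Walk.length_le_of_isSubwalk hp'
  have := Walk.length_le_of_isSubwalk hq'
  lia

variable [DecidableRel G.Adj]

theorem exists_finset_pow_le_card_endpoints [Fintype V] (hdeg : ∀ v, k + m ≤ G.degree v)
    (hg : (2 * m : ℕ) < G.egirth) (v : V) {j : ℕ} (hj : j ≤ m) :
    ∃ S : Finset V, k ^ j ≤ #S ∧ ∀ w ∈ S, ∃ p : G.Walk v w, p.IsPath ∧ p.length = j := by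
  classical
  induction j with
  | zero => exact ⟨{v}, by simp, fun w hw => mem_singleton.1 hw ▸ ⟨.nil, by simp⟩⟩
  | succ j ih =>
    obtain ⟨S, hS, hpath⟩ := ih (by lia)
    choose p hp hpj using hpath
    let next (w : S) : Finset V := G.neighborFinset w \ (p w w.2).support.toFinset
    have hconcat : ∀ w, ∀ x ∈ next w, ∃ h : G.Adj w x, ((p w w.2).concat h).IsPath :=
      fun w x hx => by
        simp only [next, mem_sdiff, mem_neighborFinset, List.mem_toFinset] at hx
        exact ⟨hx.1, (hp w w.2).concat hx.2 hx.1⟩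
    have hnext : ∀ w, k ≤ #(next w) := fun w => by
      have := le_card_sdiff (p w w.2).support.toFinset (G.neighborFinset w)
      have := (p w w.2).support.toFinset_card_le
      rw [Walk.length_support, hpj w w.2] at this
      have := hdeg w
      rw [← G.card_neighborFinset_eq_degree] at this
      lia
    have hdisj : (Set.univ : Set S).PairwiseDisjoint next := fun w _ w' _ hne =>
      disjoint_left.2 fun x hx hx' => hne <| by
        obtain ⟨h, hpath⟩ := hconcat w x hx
        obtain ⟨h', hpath'⟩ := hconcat w' x hx'
        exact Subtype.ext (Walk.concat_inj (walk_eq_of_lt_egirth hg hpath hpath'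
          (by simp [hpj, hj]) (by simp [hpj, hj]))).1
    refine ⟨univ.biUnion next, ?_, fun x hx => ?_⟩
    · calc k ^ (j + 1) ≤ #S * k := by rw [pow_succ]; gcongr
        _ ≤ ∑ w, #(next w) := by
          rw [← Fintype.card_coe, ← smul_eq_mul]
          exact card_nsmul_le_sum _ _ _ fun w _ => hnext w
        _ = #(univ.biUnion next) := (card_biUnion (by simpa using hdisj)).symm
    · obtain ⟨w, -, hx⟩ := mem_biUnion.1 hx
      obtain ⟨h, hpath⟩ := hconcat w x hx
      exact ⟨_, hpath, by rw [Walk.length_concat, hpj]⟩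

theorem egirth_le_of_card_lt_pow [Fintype V] [Nonempty V] (hdeg : ∀ v, k + m ≤ G.degree v)
    (hV : Fintype.card V < k ^ m) : G.egirth ≤ (2 * m : ℕ) := by
  by_contra! hg
  obtain ⟨S, hS, -⟩ :=
    exists_finset_pow_le_card_endpoints hdeg hg (Classical.arbitrary V) le_rfl
  exact (hV.trans_le hS).not_ge (card_le_univ S)

theorem exists_isCycle_of_card_lt_pow {T : Finset V} (hT : T.Nonempty)
    (hdeg : ∀ v ∈ T, k + m ≤ #{w ∈ T | G.Adj v w}) (hcard : #T < k ^ m) :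
    ∃ (u : V) (c : G.Walk u u), c.IsCycle ∧ c.length ≤ 2 * m ∧ ∀ x ∈ c.support, x ∈ T := by
  classical
  let H := G.induce (T : Set V)
  have : Nonempty (T : Set V) := hT.to_subtype
  have hdegH : ∀ v, k + m ≤ H.degree v := fun v => by
    refine (hdeg v v.2).trans_eq ?_
    rw [← H.card_neighborFinset_eq_degree, ← card_map (Function.Embedding.subtype _)]
    congr 1
    ext w
    simp [H, and_comm]
  have hcardH : Fintype.card (T : Set V) < k ^ m := by simpa using hcard
  have hg : H.egirth ≤ (2 * m : ℕ) := egirth_le_of_card_lt_pow hdegH hcardH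
  have hcyc : ¬ H.IsAcyclic := fun h =>
    (ENat.natCast_lt_top _).not_ge (egirth_eq_top.2 h ▸ hg)
  obtain ⟨u, c, hc, hlen⟩ := exists_egirth_eq_length.2 hcyc
  let f : H →g G := (Embedding.induce _).toHom
  refine ⟨f u, c.map f, hc.map Subtype.val_injective, ?_, ?_⟩
  · rw [Walk.length_map]
    exact Nat.cast_le.1 (hlen ▸ hg)
  · simp only [Walk.support_map, List.mem_map]
    rintro _ ⟨y, -, rfl⟩
    exact y.2

end MooreBound

section StarsAndDetours

open Finset SimpleGraph

variable {V : Type*} {G : SimpleGraph V} {m D : ℕ}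

/-- A `D`-star in `G`, given by its centre and its set of leaves. -/
structure StarIn (G : SimpleGraph V) (D : ℕ) where
  centre : V
  leaves : Finset V
  adj : ∀ x ∈ leaves, G.Adj centre x
  card_leaves : #leaves = D

/-- The vertex set of a star. -/
def StarIn.verts [DecidableEq V] (S : StarIn G D) : Finset V := insert S.centre S.leaves

theorem StarIn.card_verts_le [DecidableEq V] (S : StarIn G D) : #S.verts ≤ D + 1 :=
  (card_insert_le ..).trans_eq (congrArg (· + 1) S.card_leaves)

theorem StarIn.centre_ne_centre [DecidableEq V] {n : ℕ} {S : StarIn G D} {S' : StarIn G n}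
    (h : Disjoint S.verts S'.verts) : S.centre ≠ S'.centre :=
  disjoint_iff_ne.1 h _ (mem_insert_self ..) _ (mem_insert_self ..)

theorem StarIn.injective_centre [DecidableEq V] {ι : Type*} {S : ι → StarIn G D}
    (hS : Pairwise fun i j => Disjoint (S i).verts (S j).verts) :
    Function.Injective fun i => (S i).centre := fun _ _ hij =>
  by_contra fun hne => centre_ne_centre (hS hne) hij

/-- Two vertex disjoint `D`-stars whose centres are joined by two paths of lengths `len` and
`len + 2` that run inside a small set `inner`: a `1`-adjuster in which the two units are replaced
by stars. -/
structure DetourIn [DecidableEq V] (G : SimpleGraph V) (m D : ℕ) where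
  star : Bool → StarIn G D
  inner : Finset V
  len : ℕ
  path : Fin 2 → G.Walk (star false).centre (star true).centre
  disjoint_star : Disjoint (star false).verts (star true).verts
  disjoint_inner : ∀ b, Disjoint (star b).verts inner
  len_le : len ≤ m
  card_inner_le : #inner ≤ 2 * len
  path_isPath : ∀ i, (path i).IsPath
  path_length : ∀ i, (path i).length = len + 2 * (i : ℕ)
  path_support : ∀ i, ∀ x ∈ (path i).support,
    x ∈ inner ∨ x = (star false).centre ∨ x = (star true).centre

/-- The vertex set of a detour. -/
def DetourIn.verts [DecidableEq V] (g : DetourIn G m D) : Finset V :=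
  (g.star false).verts ∪ (g.star true).verts ∪ g.inner

theorem DetourIn.card_verts_le [DecidableEq V] (g : DetourIn G m D) :
    #g.verts ≤ 2 * D + 2 * m + 2 := by
  have := card_union_le ((g.star false).verts ∪ (g.star true).verts) g.inner
  have := card_union_le (g.star false).verts (g.star true).verts
  have := (g.star false).card_verts_le
  have := (g.star true).card_verts_le
  have := g.card_inner_le
  have := g.len_le
  simp only [verts]
  lia

theorem DetourIn.star_verts_subset [DecidableEq V] (g : DetourIn G m D) (b : Bool) :
    (g.star b).verts ⊆ g.verts := by
  cases b
  · exact subset_union_left.trans subset_union_left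
  · exact subset_union_right.trans subset_union_left

theorem IsBipartite.even_length (hG : _root_.IsBipartite G) {u : V} (c : G.Walk u u) :
    Even c.length := by
  classical
  obtain ⟨A, hA⟩ := hG
  let side : G.Coloring Bool := Coloring.mk (fun v => decide (v ∈ A)) fun {v w} hvw => by
    simp [hA hvw]
  exact (side.even_length_iff_congr c).2 Iff.rfl

theorem exists_isPath_pair_of_isCycle {u : V} {c : G.Walk u u} (hc : c.IsCycle) {l : ℕ}
    (hl : c.length = 2 * (l + 1)) :
    ∃ (v : V) (p q : G.Walk u v), p.IsPath ∧ q.IsPath ∧ p.length = l ∧ q.length = l + 2 ∧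
      p.support ⊆ c.support ∧ q.support ⊆ c.support := by
  have hc3 := hc.three_le_length
  refine ⟨c.getVert l, c.take l, (c.drop l).reverse, hc.isPath_take (by lia),
    (hc.isPath_drop (by lia)).reverse, ?_, ?_, (c.isSubwalk_take l).support_subset, ?_⟩
  · rw [Walk.take_length]; lia
  · rw [Walk.length_reverse, Walk.drop_length]; lia
  · rw [Walk.support_reverse, List.reverse_subset]
    exact (c.isSubwalk_drop l).support_subset

theorem card_toFinset_support_le_length [DecidableEq V] {u : V} {c : G.Walk u u} (hc : ¬ c.Nil) :
    #c.support.toFinset ≤ c.length := by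
  have htail : c.support.toFinset = c.support.tail.toFinset := by
    rw [← c.cons_tail_support, List.toFinset_cons, List.tail_cons]
    exact insert_eq_self.2 (List.mem_toFinset.2 (Walk.end_mem_tail_support hc))
  rw [htail]
  refine (List.toFinset_card_le _).trans_eq ?_
  rw [List.length_tail, Walk.length_support, Nat.add_sub_cancel]

variable [DecidableRel G.Adj] {T W : Finset V} {B δ k : ℕ}

theorem exists_leaves {v : V} {Z : Finset V} (hv : D + #Z ≤ #{w ∈ T | G.Adj v w}) :
    ∃ L ⊆ T, Disjoint L Z ∧ #L = D ∧ ∀ x ∈ L, G.Adj v x := by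
  classical
  have := le_card_sdiff Z {w ∈ T | G.Adj v w}
  obtain ⟨L, hL, hLD⟩ := exists_subset_card_eq (n := D) (s := {w ∈ T | G.Adj v w} \ Z) (by lia)
  exact ⟨L, hL.trans (sdiff_subset.trans (filter_subset ..)),
    disjoint_left.2 fun x hx => (mem_sdiff.1 (hL hx)).2, hLD,
    fun x hx => (mem_filter.1 (mem_sdiff.1 (hL hx)).1).2⟩

variable [DecidableEq V]

theorem exists_detour_of_isPath_pair {C : Finset V} (hCT : C ⊆ T)
    (hdeg : ∀ v ∈ C, 2 * D + #C ≤ #{w ∈ T | G.Adj v w}) {l : ℕ} (hl : l ≤ m)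
    (hC : #C ≤ 2 * (l + 1)) {u v : V} (huv : u ≠ v) {p q : G.Walk u v} (hp : p.IsPath)
    (hq : q.IsPath) (hpl : p.length = l) (hql : q.length = l + 2) (hpC : ∀ x ∈ p.support, x ∈ C)
    (hqC : ∀ x ∈ q.support, x ∈ C) : ∃ g : DetourIn G m D, g.verts ⊆ T := by
  have hu := hpC u p.start_mem_support
  have hv := hpC v p.end_mem_support
  obtain ⟨L, hLT, hLC, hLD, hLadj⟩ :=
    exists_leaves (D := D) (Z := C) ((hdeg u hu).trans' (by lia))
  obtain ⟨L', hLT', hLC', hLD', hLadj'⟩ := exists_leaves (D := D) (Z := C ∪ L)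
    ((hdeg v hv).trans' (by have := card_union_le C L; lia))
  rw [disjoint_union_right] at hLC'
  have huL' : u ∉ L' := disjoint_right.1 hLC'.1 hu
  have hvL : v ∉ L := disjoint_right.1 hLC hv
  have hinner : ∀ x ∈ C, x ∈ C \ {u, v} ∨ x = u ∨ x = v := by
    grind
  have hcard : #(C \ {u, v}) ≤ 2 * l := by
    rw [card_sdiff_of_subset (by simp [insert_subset_iff, hu, hv]), card_pair huv]
    lia
  refine ⟨⟨fun b => bif b then ⟨v, L', hLadj', hLD'⟩ else ⟨u, L, hLadj, hLD⟩, C \ {u, v}, l,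
    ![p, q], ?_, ?_, hl, hcard, Fin.forall_fin_two.2 ⟨hp, hq⟩, Fin.forall_fin_two.2 ⟨hpl, hql⟩,
    Fin.forall_fin_two.2 ⟨fun x hx => hinner x (hpC x hx), fun x hx => hinner x (hqC x hx)⟩⟩, ?_⟩
  · simp [StarIn.verts, huv.symm, huL', hvL, hLC'.2.symm]
  · simp only [Bool.forall_bool, cond_false, cond_true, StarIn.verts, disjoint_insert_left]
    exact ⟨⟨by simp, hLC.mono_right sdiff_subset⟩, by simp, hLC'.1.mono_right sdiff_subset⟩
  · simp [DetourIn.verts, StarIn.verts, union_subset_iff, insert_subset_iff, hCT hu, hCT hv, hLT,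
      hLT', sdiff_subset.trans hCT]

theorem RobustlyDense.exists_detour [Fintype V] (h : RobustlyDense G B δ)
    (hG : _root_.IsBipartite G) (hk : k + m ≤ δ) (hD : 2 * D + 2 * m ≤ δ)
    (hV : Fintype.card V < k ^ m) (hW : #W ≤ B) :
    ∃ g : DetourIn G m D, Disjoint g.verts W := by
  obtain ⟨T, hT, hTW, hdeg⟩ := h W hW
  obtain ⟨u, c, hc, hcm, hcT⟩ := exists_isCycle_of_card_lt_pow hT
    (fun v hv => hk.trans (hdeg v hv)) ((card_le_univ T).trans_lt hV)
  have hc3 := hc.three_le_length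
  obtain ⟨l, hl⟩ : ∃ l, c.length = 2 * (l + 1) :=
    (hG.even_length c).elim fun r hr => ⟨r - 1, by lia⟩
  obtain ⟨v, p, q, hp, hq, hpl, hql, hpc, hqc⟩ := exists_isPath_pair_of_isCycle hc hl
  have huv : u ≠ v := by
    rintro rfl
    have := Walk.length_eq_zero_iff.2 (Walk.isPath_iff_nil.1 hp)
    lia
  have hcard := card_toFinset_support_le_length hc.not_nil
  obtain ⟨g, hg⟩ := exists_detour_of_isPath_pair (G := G) (m := m) (D := D) (T := T)
    (C := c.support.toFinset) (fun x hx => hcT x (List.mem_toFinset.1 hx))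
    (fun x hx => (hdeg x (hcT x (List.mem_toFinset.1 hx))).trans' (by lia)) (by lia)
    (hcard.trans_eq hl) huv hp hq hpl hql (fun x hx => List.mem_toFinset.2 (hpc hx))
    fun x hx => List.mem_toFinset.2 (hqc hx)
  exact ⟨g, disjoint_of_subset_left hg hTW⟩

theorem RobustlyDense.exists_star (h : RobustlyDense G B δ) (hD : D ≤ δ) (hW : #W ≤ B) :
    ∃ S : StarIn G D, Disjoint S.verts W := by
  obtain ⟨T, ⟨v, hv⟩, hTW, hdeg⟩ := h W hW
  obtain ⟨L, hLT, -, hLD, hLadj⟩ := exists_leaves (D := D) (Z := ∅)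
    (by simpa using hD.trans (hdeg v hv))
  exact ⟨⟨v, L, hLadj, hLD⟩, disjoint_of_subset_left (insert_subset hv hLT) hTW⟩

end StarsAndDetours

section GreedyChoice

open Finset

theorem exists_pairwise_disjoint_of_forall_exists_disjoint {V α : Type*} {verts : α → Finset V}
    {s B : ℕ} (hs : ∀ a, #(verts a) ≤ s)
    (h : ∀ W : Finset V, #W ≤ B → ∃ a, Disjoint (verts a) W) (N : ℕ) {W : Finset V}
    (hW : #W + N * s ≤ B) :
    ∃ f : Fin N → α, (∀ i, Disjoint (verts (f i)) W) ∧
      Pairwise fun i j => Disjoint (verts (f i)) (verts (f j)) := by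
  classical
  induction N generalizing W with
  | zero => exact ⟨Fin.elim0, fun i => i.elim0, fun i => i.elim0⟩
  | succ N ih =>
    rw [add_one_mul] at hW
    obtain ⟨a, ha⟩ := h W (by lia)
    obtain ⟨f, hfW, hf⟩ := ih (W := W ∪ verts a) (by
      have := card_union_le W (verts a)
      have := hs a
      lia)
    simp only [disjoint_union_right] at hfW
    refine ⟨Fin.cons a f, Fin.cases ha fun i => (hfW i).1, ?_⟩
    refine Fin.cases (Fin.cases (absurd rfl) fun j _ => (hfW j).2.symm) fun i =>
      Fin.cases (fun _ => (hfW i).2) fun j hij => hf fun h => hij (congrArg Fin.succ h)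

end GreedyChoice

section Expansion

open Finset SimpleGraph

variable {V : Type*} {G : SimpleGraph V}

/-- Any two vertex sets of size at least `E` are joined by a path of length at most `l` that avoids
a prescribed set of at most `ζ` vertices. -/
def ConnectsLargeSets (G : SimpleGraph V) (E ζ l : ℕ) : Prop :=
  ∀ X Y Z : Finset V, E ≤ #X → E ≤ #Y → #Z ≤ ζ →
    ∃ x ∈ X, ∃ y ∈ Y, ∃ p : G.Walk x y, p.IsPath ∧ p.length ≤ l ∧ ∀ z ∈ p.support, z ∉ Z

variable [Fintype V]

/-- Every vertex set containing at least `a` and at most half of the vertices has an external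
neighbourhood at least `ε` times as large as itself. -/
def ExpandsAbove (G : SimpleGraph V) (a : ℕ) (ε : ℝ) : Prop :=
  ∀ X : Finset V, a ≤ #X → 2 * #X ≤ Fintype.card V → ε * #X ≤ (extNbr G X).ncard

open Classical in
/-- The ball of radius `i` around the vertex set `X` in the graph `G - Z`. -/
noncomputable def ballAvoiding (G : SimpleGraph V) (X Z : Finset V) (i : ℕ) : Finset V :=
  {w | ∃ x ∈ X, ∃ p : G.Walk x w, p.length ≤ i ∧ ∀ z ∈ p.support, z ∉ Z}

variable {X Y Z : Finset V} {i : ℕ}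

theorem mem_ballAvoiding {w : V} : w ∈ ballAvoiding G X Z i ↔
    ∃ x ∈ X, ∃ p : G.Walk x w, p.length ≤ i ∧ ∀ z ∈ p.support, z ∉ Z := by
  simp [ballAvoiding]

theorem subset_ballAvoiding (h : Disjoint X Z) : X ⊆ ballAvoiding G X Z i := fun x hx =>
  mem_ballAvoiding.2 ⟨x, hx, .nil, by simp, by simpa using disjoint_left.1 h hx⟩

theorem ballAvoiding_subset_succ : ballAvoiding G X Z i ⊆ ballAvoiding G X Z (i + 1) := by
  intro w hw
  obtain ⟨x, hx, p, hp, hpZ⟩ := mem_ballAvoiding.1 hw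
  exact mem_ballAvoiding.2 ⟨x, hx, p, hp.trans i.le_succ, hpZ⟩

theorem mem_ballAvoiding_succ {w : V} (hw : w ∈ extNbr G (ballAvoiding G X Z i)) (hwZ : w ∉ Z) :
    w ∈ ballAvoiding G X Z (i + 1) := by
  obtain ⟨-, v, hv, hvw⟩ := hw
  obtain ⟨x, hx, p, hp, hpZ⟩ := mem_ballAvoiding.1 hv
  refine mem_ballAvoiding.2 ⟨x, hx, p.concat hvw, by simpa using hp, fun z hz => ?_⟩
  rw [Walk.support_concat, List.mem_append, List.mem_singleton] at hz
  exact hz.elim (hpZ z) (· ▸ hwZ)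

theorem card_ballAvoiding_add_ncard_extNbr_le :
    #(ballAvoiding G X Z i) + (extNbr G (ballAvoiding G X Z i)).ncard ≤
      #(ballAvoiding G X Z (i + 1)) + #Z := by
  classical
  set S := ballAvoiding G X Z i
  have hdisj : Disjoint (S : Set V) (extNbr G S) := Set.disjoint_left.2 fun x hx hx' => hx'.1 hx
  have hsub : (S : Set V) ∪ extNbr G S ⊆ (ballAvoiding G X Z (i + 1) ∪ Z : Finset V) := by
    rintro w (hw | hw)
    · exact mem_union_left _ (ballAvoiding_subset_succ hw)
    · by_cases hwZ : w ∈ Z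
      · exact mem_union_right _ hwZ
      · exact mem_union_left _ (mem_ballAvoiding_succ hw hwZ)
  rw [← Set.ncard_coe_finset S, ← Set.ncard_union_eq hdisj]
  exact (Set.ncard_le_ncard hsub).trans ((Set.ncard_coe_finset _).trans_le (card_union_le ..))

variable {a m : ℕ} {ε : ℝ}

theorem ExpandsAbove.pow_mul_card_le_card_ballAvoiding (hG : ExpandsAbove G a (2 * ε))
    (hε : 0 ≤ ε) (hX : a ≤ #X) (hZ : #Z ≤ ε * #X) (hXZ : Disjoint X Z)
    (hi : 2 * #(ballAvoiding G X Z i) ≤ Fintype.card V) :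
    (1 + ε) ^ i * #X ≤ #(ballAvoiding G X Z i) := by
  induction i with
  | zero => simpa using card_le_card (subset_ballAvoiding hXZ)
  | succ i ih =>
    have hmono := card_le_card (ballAvoiding_subset_succ (G := G) (X := X) (Z := Z) (i := i))
    have hXS := card_le_card (subset_ballAvoiding (G := G) (i := i) hXZ)
    have hstep : (#(ballAvoiding G X Z i) + (extNbr G (ballAvoiding G X Z i)).ncard : ℝ) ≤
        #(ballAvoiding G X Z (i + 1)) + #Z := by
      exact_mod_cast card_ballAvoiding_add_ncard_extNbr_le
    have hexp := hG _ (hX.trans hXS) (by lia)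
    have hZS : (#Z : ℝ) ≤ ε * #(ballAvoiding G X Z i) := hZ.trans (by gcongr)
    calc (1 + ε) ^ (i + 1) * #X = (1 + ε) * ((1 + ε) ^ i * #X) := by ring
      _ ≤ (1 + ε) * #(ballAvoiding G X Z i) := by gcongr; exact ih (by lia)
      _ ≤ #(ballAvoiding G X Z (i + 1)) := by linarith

theorem ExpandsAbove.card_lt_two_mul_card_ballAvoiding (hG : ExpandsAbove G a (2 * ε))
    (hε : 0 ≤ ε) (ha : 0 < a) (hm : Fintype.card V ≤ (1 + ε) ^ m * a) (hX : a ≤ #X)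
    (hZ : #Z ≤ ε * #X) (hXZ : Disjoint X Z) :
    Fintype.card V < 2 * #(ballAvoiding G X Z m) := by
  by_contra! hle
  have hgrow := hG.pow_mul_card_le_card_ballAvoiding hε hX hZ hXZ hle
  have hVS : (Fintype.card V : ℝ) ≤ #(ballAvoiding G X Z m) :=
    hm.trans (le_trans (by gcongr) hgrow)
  have hXS := card_le_card (subset_ballAvoiding (G := G) (i := m) hXZ)
  rw [Nat.cast_le] at hVS
  lia

theorem exists_isPath_of_card_lt_two_mul_card_ballAvoiding
    (hX : Fintype.card V < 2 * #(ballAvoiding G X Z m))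
    (hY : Fintype.card V < 2 * #(ballAvoiding G Y Z m)) :
    ∃ x ∈ X, ∃ y ∈ Y, ∃ p : G.Walk x y, p.IsPath ∧ p.length ≤ 2 * m ∧ ∀ z ∈ p.support, z ∉ Z := by
  classical
  obtain ⟨w, hwX, hwY⟩ : ∃ w, w ∈ ballAvoiding G X Z m ∧ w ∈ ballAvoiding G Y Z m := by
    by_contra! h
    have := card_le_univ (ballAvoiding G X Z m ∪ ballAvoiding G Y Z m)
    rw [card_union_of_disjoint (disjoint_left.2 h)] at this
    lia
  obtain ⟨x, hx, p, hp, hpZ⟩ := mem_ballAvoiding.1 hwX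
  obtain ⟨y, hy, q, hq, hqZ⟩ := mem_ballAvoiding.1 hwY
  refine ⟨x, hx, y, hy, (p.append q.reverse).bypass, Walk.bypass_isPath _,
    (Walk.length_bypass_le_length _).trans ?_, fun z hz => ?_⟩
  · rw [Walk.length_append, Walk.length_reverse]
    lia
  · have := Walk.support_bypass_subset_support _ hz
    rw [Walk.mem_support_append_iff, Walk.support_reverse, List.mem_reverse] at this
    exact this.elim (hpZ z) (hqZ z)

theorem ExpandsAbove.connectsLargeSets (hG : ExpandsAbove G a (2 * ε)) (hε : 0 ≤ ε) (ha : 0 < a)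
    (hm : Fintype.card V ≤ (1 + ε) ^ m * a) {E ζ : ℕ} (hE : a + ζ ≤ E)
    (hζ : ζ ≤ ε * (E - ζ : ℕ)) : ConnectsLargeSets G E ζ (2 * m) := by
  classical
  intro X Y Z hX hY hZ
  have hball : ∀ S : Finset V, E ≤ #S → Fintype.card V < 2 * #(ballAvoiding G (S \ Z) Z m) := by
    intro S hS
    have hcard := le_card_sdiff Z S
    have hES : E - ζ ≤ #(S \ Z) := by lia
    have hZS : (#Z : ℝ) ≤ ε * #(S \ Z) :=
      (Nat.cast_le.2 hZ).trans (hζ.trans (by gcongr))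
    exact hG.card_lt_two_mul_card_ballAvoiding hε ha hm (by lia) hZS sdiff_disjoint
  obtain ⟨x, hx, y, hy, p, hp⟩ :=
    exists_isPath_of_card_lt_two_mul_card_ballAvoiding (hball X hX) (hball Y hY)
  exact ⟨x, (mem_sdiff.1 hx).1, y, (mem_sdiff.1 hy).1, p, hp⟩

end Expansion

section Linkings

open Finset SimpleGraph

variable {V ι κ : Type*} {G : SimpleGraph V} {D H : ℕ} {C : ι → StarIn G D} {S : κ → StarIn G H}

/-- A walk from the centre of a star of the family `C` to the centre of a star of the family `S`. -/
structure LinkIn (C : ι → StarIn G D) (S : κ → StarIn G H) where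
  src : ι
  tgt : κ
  path : G.Walk (C src).centre (S tgt).centre

/-- The vertices of a link other than its two ends. -/
def LinkIn.interior [DecidableEq V] (e : LinkIn C S) : Finset V :=
  (e.path.support.toFinset.erase (C e.src).centre).erase (S e.tgt).centre

/-- A finite set of internally disjoint links of length at most `l` that run outside `Z`, use
every star of `C` at most `T` times, and use every star of `S` at most once. -/
structure IsLinking [DecidableEq V] [DecidableEq ι] (Z : Finset V) (l T : ℕ)
    (F : Finset (LinkIn C S)) : Prop where
  isPath : ∀ e ∈ F, e.path.IsPath
  length_le : ∀ e ∈ F, e.path.length ≤ l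
  disjoint_interior : ∀ e ∈ F, Disjoint e.interior Z
  injOn_tgt : Set.InjOn LinkIn.tgt (F : Set (LinkIn C S))
  pairwiseDisjoint : (F : Set (LinkIn C S)).PairwiseDisjoint LinkIn.interior
  card_src_le : ∀ i, #{e ∈ F | e.src = i} ≤ T

variable [DecidableEq V] {Z : Finset V} {l T : ℕ}

theorem LinkIn.mem_support_iff {e : LinkIn C S} {x : V} : x ∈ e.path.support ↔
    x = (C e.src).centre ∨ x = (S e.tgt).centre ∨ x ∈ e.interior := by
  have := e.path.start_mem_support
  have := e.path.end_mem_support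
  simp only [interior, mem_erase, List.mem_toFinset]
  grind

theorem LinkIn.card_interior_le (e : LinkIn C S) : #e.interior ≤ e.path.length + 1 := by
  rw [← Walk.length_support]
  exact (card_le_card ((erase_subset ..).trans (erase_subset ..))).trans (List.toFinset_card_le _)

theorem card_biUnion_leaves (hC : Pairwise fun i j => Disjoint (C i).verts (C j).verts)
    (A : Finset ι) : #(A.biUnion fun i => (C i).leaves) = #A * D := by
  have hdisj : (A : Set ι).PairwiseDisjoint fun i => (C i).leaves := fun i _ j _ hij =>
    (hC hij).mono (subset_insert ..) (subset_insert ..)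
  rw [card_biUnion hdisj, sum_const_nat fun i _ => (C i).card_leaves]

theorem ConnectsLargeSets.exists_linkIn {E ζ r : ℕ} (hG : ConnectsLargeSets G E ζ r)
    (hC : Pairwise fun i j => Disjoint (C i).verts (C j).verts)
    (hS : Pairwise fun i j => Disjoint (S i).verts (S j).verts)
    (hCS : ∀ i j, Disjoint (C i).verts (S j).verts) {A : Finset ι} {B : Finset κ}
    (hA : E ≤ #A * D) (hB : E ≤ #B * H) (hZ : #Z ≤ ζ) (hCZ : ∀ i, (C i).centre ∈ Z)
    (hSZ : ∀ j, (S j).centre ∈ Z) :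
    ∃ e : LinkIn C S, e.src ∈ A ∧ e.tgt ∈ B ∧ e.path.IsPath ∧ e.path.length ≤ r + 2 ∧
      Disjoint e.interior Z := by
  rw [← card_biUnion_leaves hC] at hA
  rw [← card_biUnion_leaves hS] at hB
  obtain ⟨x, hx, y, hy, p, hp, hpl, hpZ⟩ := hG _ _ Z hA hB hZ
  obtain ⟨i, hi, hxi⟩ := mem_biUnion.1 hx
  obtain ⟨j, hj, hyj⟩ := mem_biUnion.1 hy
  have hip : (C i).centre ∉ p.support := fun h => hpZ _ h (hCZ i)
  have hjp : (S j).centre ∉ p.support := fun h => hpZ _ h (hSZ j)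
  have hij : (C i).centre ≠ (S j).centre := StarIn.centre_ne_centre (hCS i j)
  refine ⟨⟨i, j, .cons ((C i).adj x hxi) (p.concat ((S j).adj y hyj).symm)⟩, hi, hj, ?_, ?_, ?_⟩
  · rw [Walk.cons_isPath_iff, Walk.support_concat]
    exact ⟨hp.concat hjp _, by simp [hip, hij]⟩
  · rw [Walk.length_cons, Walk.length_concat]
    lia
  · refine disjoint_left.2 fun z hz => hpZ z ?_
    simp only [LinkIn.interior, Walk.support_cons, Walk.support_concat, mem_erase,
      List.mem_toFinset, List.mem_cons, List.mem_append] at hz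
    tauto

namespace IsLinking

variable [DecidableEq ι] {F : Finset (LinkIn C S)}

theorem card_le [Fintype ι] (h : IsLinking Z l T F) : #F ≤ Fintype.card ι * T := by
  rw [mul_comm]
  exact card_le_mul_card_image_of_maps_to (fun e _ => mem_univ e.src) T fun i _ => h.card_src_le i

theorem card_biUnion_interior_le (h : IsLinking Z l T F) :
    #(F.biUnion LinkIn.interior) ≤ #F * (l + 1) :=
  card_biUnion_le_card_mul _ _ _ fun e he =>
    e.card_interior_le.trans (Nat.succ_le_succ (h.length_le e he))

theorem eq_centre_of_mem_support (h : IsLinking Z l T F)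
    (hC : Pairwise fun i j => Disjoint (C i).verts (C j).verts)
    (hS : Pairwise fun i j => Disjoint (S i).verts (S j).verts)
    (hCS : ∀ i j, Disjoint (C i).verts (S j).verts) (hCZ : ∀ i, (C i).centre ∈ Z)
    (hSZ : ∀ j, (S j).centre ∈ Z) {e f : LinkIn C S} (he : e ∈ F) (hf : f ∈ F) (hef : e ≠ f)
    {x : V} (hxe : x ∈ e.path.support) (hxf : x ∈ f.path.support) :
    e.src = f.src ∧ x = (C e.src).centre := by
  have hCC : (C e.src).centre = (C f.src).centre → e.src = f.src :=
    fun hef => StarIn.injective_centre hC hef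
  have hSS : (S e.tgt).centre ≠ (S f.tgt).centre :=
    (StarIn.injective_centre hS).ne fun htgt => hef (h.injOn_tgt he hf htgt)
  have hne : ∀ i j, (C i).centre ≠ (S j).centre := fun i j => StarIn.centre_ne_centre (hCS i j)
  have heZ := disjoint_left.1 (h.disjoint_interior e he)
  have hfZ := disjoint_left.1 (h.disjoint_interior f hf)
  have hd := disjoint_left.1 (h.pairwiseDisjoint he hf hef)
  rw [LinkIn.mem_support_iff] at hxe hxf
  grind

theorem cons (h : IsLinking Z l T F) {e : LinkIn C S} (hp : e.path.IsPath)
    (hl : e.path.length ≤ l) (hZ : Disjoint e.interior (Z ∪ F.biUnion LinkIn.interior))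
    (htgt : e.tgt ∉ LinkIn.tgt '' (F : Set (LinkIn C S)))
    (hsrc : #{f ∈ F | f.src = e.src} < T) :
    IsLinking Z l T (F.cons e fun he => htgt (Set.mem_image_of_mem _ he)) := by
  have heF : e ∉ F := fun he => htgt (Set.mem_image_of_mem _ he)
  rw [disjoint_union_right, disjoint_biUnion_right] at hZ
  refine ⟨?_, ?_, ?_, ?_, ?_, fun i => ?_⟩
  · exact (forall_mem_cons ..).2 ⟨hp, h.isPath⟩
  · exact (forall_mem_cons ..).2 ⟨hl, h.length_le⟩
  · exact (forall_mem_cons ..).2 ⟨hZ.1, h.disjoint_interior⟩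
  · rw [coe_cons, Set.injOn_insert heF]
    exact ⟨h.injOn_tgt, htgt⟩
  · rw [coe_cons, Set.pairwiseDisjoint_insert]
    exact ⟨h.pairwiseDisjoint, fun f hf _ => hZ.2 f hf⟩
  · rw [filter_cons]
    split_ifs with hi
    · rw [card_cons, ← hi]
      exact hsrc
    · exact h.card_src_le i

theorem exists_card_eq_add_one [Fintype ι] [Fintype κ] {E ζ r : ℕ}
    (hG : ConnectsLargeSets G E ζ r) (h : IsLinking Z (r + 2) T F)
    (hC : Pairwise fun i j => Disjoint (C i).verts (C j).verts)
    (hS : Pairwise fun i j => Disjoint (S i).verts (S j).verts)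
    (hCS : ∀ i j, Disjoint (C i).verts (S j).verts) (hCZ : ∀ i, (C i).centre ∈ Z)
    (hSZ : ∀ j, (S j).centre ∈ Z) (hζ : #Z + Fintype.card ι * T * (r + 3) ≤ ζ)
    (hE : E ≤ (Fintype.card κ - Fintype.card ι * T) * H)
    (hF : E ≤ #{i | #{e ∈ F | e.src = i} < T} * D) :
    ∃ F' : Finset (LinkIn C S), IsLinking Z (r + 2) T F' ∧ #F' = #F + 1 := by
  classical
  have hcard := h.card_le
  have hZF : #(Z ∪ F.biUnion LinkIn.interior) ≤ ζ := (card_union_le ..).trans <|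
    hζ.trans' (by gcongr; exact h.card_biUnion_interior_le.trans (by gcongr))
  have hfree : E ≤ #(F.image LinkIn.tgt)ᶜ * H := hE.trans <| by
    rw [card_compl]
    have := card_image_le (s := F) (f := LinkIn.tgt)
    gcongr
    lia
  obtain ⟨e, hsrc, htgt, hp, hl, hZ⟩ := hG.exists_linkIn hC hS hCS hF hfree hZF
    (fun i => mem_union_left _ (hCZ i)) fun j => mem_union_left _ (hSZ j)
  rw [mem_compl, ← mem_coe, coe_image] at htgt
  exact ⟨_, h.cons hp hl hZ htgt (mem_filter.1 hsrc).2, card_cons _⟩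

end IsLinking

theorem ConnectsLargeSets.exists_isLinking [DecidableEq ι] [Fintype ι] [Fintype κ] {E ζ r : ℕ}
    (hG : ConnectsLargeSets G E ζ r)
    (hC : Pairwise fun i j => Disjoint (C i).verts (C j).verts)
    (hS : Pairwise fun i j => Disjoint (S i).verts (S j).verts)
    (hCS : ∀ i j, Disjoint (C i).verts (S j).verts) (hCZ : ∀ i, (C i).centre ∈ Z)
    (hSZ : ∀ j, (S j).centre ∈ Z) (hζ : #Z + Fintype.card ι * T * (r + 3) ≤ ζ)
    (hE : E ≤ (Fintype.card κ - Fintype.card ι * T) * H) :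
    ∃ F : Finset (LinkIn C S), IsLinking Z (r + 2) T F ∧
      #{i | #{e ∈ F | e.src = i} < T} * D < E := by
  by_contra! hF
  have hall : ∀ k, ∃ F : Finset (LinkIn C S), IsLinking Z (r + 2) T F ∧ #F = k := by
    intro k
    induction k with
    | zero => exact ⟨∅, ⟨by simp, by simp, by simp, by simp, by simp, by simp⟩, card_empty⟩
    | succ k ih =>
      obtain ⟨F, h, rfl⟩ := ih
      exact h.exists_card_eq_add_one hG hC hS hCS hCZ hSZ hζ hE (hF F h)
  obtain ⟨F, h, hcard⟩ := hall (Fintype.card ι * T + 1)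
  have := h.card_le
  lia

end Linkings

section Units

open Finset SimpleGraph

variable {V ι κ : Type*} {G : SimpleGraph V} {D H : ℕ} {C : ι → StarIn G D} {S : κ → StarIn G H}
  {Z : Finset V} {l T h₀ h₁ L : ℕ}

theorem exists_injective_leaves_notMem_support {e : Fin h₀ → LinkIn C S}
    (he : ∀ a, (e a).path.length ≤ l) (hH : h₁ + h₀ * (l + 1) ≤ H) :
    ∃ x : Fin h₀ → Fin h₁ → V, (∀ a, Function.Injective (x a)) ∧
      (∀ a q, x a q ∈ (S (e a).tgt).leaves) ∧ ∀ a b q, x a q ∉ (e b).path.support := by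
  classical
  let U : Finset V := univ.biUnion fun a => (e a).path.support.toFinset
  have hU : #U ≤ h₀ * (l + 1) := by
    refine (card_biUnion_le_card_mul _ _ (l + 1) fun a _ => ?_).trans_eq (by simp)
    exact (List.toFinset_card_le _).trans ((Walk.length_support _).trans_le (by simpa using he a))
  have hcard : ∀ a, h₁ ≤ #((S (e a).tgt).leaves \ U) := fun a => by
    have := le_card_sdiff U (S (e a).tgt).leaves
    rw [(S (e a).tgt).card_leaves] at this
    lia
  choose x hx hxU using fun a => exists_injective_mem_of_card_le
    (fun _ : Fin h₁ => (S (e a).tgt).leaves \ U) fun _ => (Fintype.card_fin h₁).trans_le (hcard a)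
  refine ⟨x, hx, fun a q => (mem_sdiff.1 (hxU a q)).1, fun a b q hq => ?_⟩
  exact (mem_sdiff.1 (hxU a q)).2 (mem_biUnion.2 ⟨b, mem_univ b, List.mem_toFinset.2 hq⟩)

variable [DecidableEq V] [DecidableEq ι] {F : Finset (LinkIn C S)}

namespace IsLinking

theorem exists_embedding_of_le_card_src (h : IsLinking Z l T F) {i : ι}
    (hi : (l + 1) * h₀ ≤ #{e ∈ F | e.src = i}) :
    ∃ (s : ℕ) (e : Fin h₀ ↪ LinkIn C S),
      ∀ a, e a ∈ F ∧ (e a).src = i ∧ (e a).path.length = s := by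
  obtain ⟨s, -, hs⟩ := exists_le_card_fiber_of_mul_le_card_of_maps_to
    (s := {e ∈ F | e.src = i}) (t := range (l + 1)) (f := fun e => e.path.length) (n := h₀)
    (fun e he => mem_range_succ_iff.2 (h.length_le e (mem_filter.1 he).1)) (by simp)
    (by rwa [card_range])
  obtain ⟨A, hA, hAh⟩ := exists_subset_card_eq hs
  refine ⟨s, (A.equivFinOfCardEq hAh).symm.toEmbedding.trans (.subtype _), fun a => ?_⟩
  have ha := hA ((A.equivFinOfCardEq hAh).symm a).2
  rwa [filter_filter, mem_filter] at ha

theorem exists_unitIn_of_embedding (h : IsLinking Z l T F)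
    (hC : Pairwise fun i j => Disjoint (C i).verts (C j).verts)
    (hS : Pairwise fun i j => Disjoint (S i).verts (S j).verts)
    (hCS : ∀ i j, Disjoint (C i).verts (S j).verts) (hCZ : ∀ i, (C i).centre ∈ Z)
    (hSZ : ∀ j, (S j).centre ∈ Z) (hh₀ : 0 < h₀) (hL : l < L) (hH : h₁ + h₀ * (l + 1) ≤ H)
    {i : ι} {s : ℕ} {e : Fin h₀ ↪ LinkIn C S}
    (he : ∀ a, e a ∈ F ∧ (e a).src = i ∧ (e a).path.length = s) :
    ∃ U : UnitIn G h₀ h₁ L, U.core = (C i).centre ∧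
      (∀ x ∈ U.interior, ∃ a, x ∈ (e a).path.support) ∧
      ∀ a q, ∃ j, U.leaf a q ∈ (S j).leaves := by
  choose heF hei hes using he
  obtain ⟨x, hx, hxS, hxe⟩ :=
    exists_injective_leaves_notMem_support (fun a => h.length_le _ (heF a)) hH
  have htgt : Function.Injective fun a => (e a).tgt := fun a b hab =>
    e.injective (h.injOn_tgt (heF a) (heF b) hab)
  have hpos : 0 < s := by
    rw [← hes ⟨0, hh₀⟩, Nat.pos_iff_ne_zero]
    exact fun h0 => StarIn.centre_ne_centre (hCS _ _) (Walk.eq_of_length_eq_zero h0)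
  refine ⟨⟨(C i).centre, fun a => (S (e a).tgt).centre, x,
    fun a => (e a).path.copy (congrArg (fun i => (C i).centre) (hei a)) rfl, s, hpos,
    (hes ⟨0, hh₀⟩ ▸ h.length_le _ (heF _)).trans_lt hL, fun a => ?_, fun a => ?_,
    fun a q => (S _).adj _ (hxS a q), (StarIn.injective_centre hS).comp htgt, ?_,
    fun a b q hab => ?_, fun a b hab v hva hvb => ?_, fun a b q hq => ?_⟩, rfl, ?_,
    fun a q => ⟨_, hxS a q⟩⟩
  · exact (Walk.isPath_copy ..).2 (h.isPath _ (heF a))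
  · exact (Walk.length_copy ..).trans (hes a)
  · rintro ⟨a, q⟩ ⟨b, r⟩ (hab : x a q = x b r)
    obtain rfl | hne := eq_or_ne a b
    · rw [hx a hab]
    · exact absurd hab (disjoint_iff_ne.1 (hS (htgt.ne hne)) _ (mem_insert_of_mem (hxS a q)) _
        (mem_insert_of_mem (hxS b r)))
  · exact hxe b a q (hab ▸ (e a).path.end_mem_support)
  · rw [Walk.support_copy] at hva hvb
    rw [← hei a]
    exact (h.eq_centre_of_mem_support hC hS hCS hCZ hSZ (heF a) (heF b) (e.injective.ne hab)
      hva hvb).2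
  · rw [Walk.support_copy] at hq
    exact hxe b a q hq
  · rintro v ⟨a, hva⟩
    exact ⟨a, by rwa [Walk.support_copy] at hva⟩

theorem exists_unitIn (h : IsLinking Z l T F)
    (hC : Pairwise fun i j => Disjoint (C i).verts (C j).verts)
    (hS : Pairwise fun i j => Disjoint (S i).verts (S j).verts)
    (hCS : ∀ i j, Disjoint (C i).verts (S j).verts) (hCZ : ∀ i, (C i).centre ∈ Z)
    (hSZ : ∀ j, (S j).centre ∈ Z) (hh₀ : 0 < h₀) (hL : l < L) (hH : h₁ + h₀ * (l + 1) ≤ H)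
    {i : ι} (hi : (l + 1) * h₀ ≤ #{e ∈ F | e.src = i}) :
    ∃ U : UnitIn G h₀ h₁ L, U.core = (C i).centre ∧
      (∀ x ∈ U.interior, ∃ e ∈ F, e.src = i ∧ x ∈ e.path.support) ∧
      ∀ a q, ∃ j, U.leaf a q ∈ (S j).leaves := by
  obtain ⟨s, e, he⟩ := h.exists_embedding_of_le_card_src hi
  obtain ⟨U, hUcore, hUint, hUleaf⟩ :=
    h.exists_unitIn_of_embedding hC hS hCS hCZ hSZ hh₀ hL hH he
  refine ⟨U, hUcore, fun x hx => ?_, hUleaf⟩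
  obtain ⟨a, ha⟩ := hUint x hx
  exact ⟨e a, (he a).1, (he a).2.1, ha⟩

end IsLinking

theorem ConnectsLargeSets.exists_unitIn [Fintype ι] [Fintype κ] {E ζ r : ℕ}
    (hG : ConnectsLargeSets G E ζ r)
    (hC : Pairwise fun i j => Disjoint (C i).verts (C j).verts)
    (hS : Pairwise fun i j => Disjoint (S i).verts (S j).verts)
    (hCS : ∀ i j, Disjoint (C i).verts (S j).verts) (hCZ : ∀ i, Disjoint (C i).verts Z)
    (hSZ : ∀ j, Disjoint (S j).verts Z)
    (hζ : #Z + Fintype.card ι + Fintype.card κ + Fintype.card ι * T * (r + 3) ≤ ζ)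
    (hE : E ≤ (Fintype.card κ - Fintype.card ι * T) * H) (hh₀ : 0 < h₀) (hL : r + 2 < L)
    (hT : (r + 3) * h₀ ≤ T) (hH : h₁ + h₀ * (r + 3) ≤ H) :
    ∃ (I : Finset ι) (U : I → UnitIn G h₀ h₁ L), #Iᶜ * D < E ∧
      (∀ i, (U i).core = (C i).centre ∧ Disjoint (U i).verts Z) ∧
      Pairwise fun i j => Disjoint (U i).interior (U j).interior := by
  let Z' : Finset V := Z ∪ univ.image (fun i => (C i).centre) ∪ univ.image fun j => (S j).centre
  have hZ' : #Z' ≤ #Z + Fintype.card ι + Fintype.card κ :=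
    (card_union_le ..).trans (add_le_add ((card_union_le ..).trans
      (add_le_add_right card_image_le _)) card_image_le)
  have hCZ' : ∀ i, (C i).centre ∈ Z' := fun i => by simp [Z']
  have hSZ' : ∀ j, (S j).centre ∈ Z' := fun j => by simp [Z']
  obtain ⟨F, hF, hFE⟩ := hG.exists_isLinking hC hS hCS hCZ' hSZ' (T := T)
    (hζ.trans' (add_le_add_left hZ' _)) hE
  let I : Finset ι := {i | T ≤ #{e ∈ F | e.src = i}}
  choose U hUcore hUint hUleaf using fun i : I => hF.exists_unitIn hC hS hCS hCZ' hSZ' hh₀ hL hH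
    (hT.trans (mem_filter.1 i.2).2)
  refine ⟨I, U, by simpa [I, compl_filter] using hFE, fun i => ⟨hUcore i, ?_⟩, fun i j hij => ?_⟩
  · refine Set.disjoint_left.2 ?_
    rintro x (hx | ⟨⟨a, q⟩, rfl⟩) hxZ
    · obtain ⟨e, he, -, hxe⟩ := hUint i x hx
      obtain rfl | rfl | hxe := LinkIn.mem_support_iff.1 hxe
      · exact disjoint_left.1 (hCZ _) (mem_insert_self ..) hxZ
      · exact disjoint_left.1 (hSZ _) (mem_insert_self ..) hxZ
      · exact disjoint_left.1 (hF.disjoint_interior e he) hxe (by simp [Z', mem_coe.1 hxZ])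
    · obtain ⟨j, hj⟩ := hUleaf i a q
      exact disjoint_left.1 (hSZ j) (mem_insert_of_mem hj) hxZ
  · refine Set.disjoint_left.2 fun x hxi hxj => ?_
    obtain ⟨e, he, hei, hxe⟩ := hUint i x hxi
    obtain ⟨f, hf, hfj, hxf⟩ := hUint j x hxj
    have hne : e.src ≠ f.src := hei ▸ hfj ▸ Subtype.coe_ne_coe.2 hij
    exact hne (hF.eq_centre_of_mem_support hC hS hCS hCZ' hSZ' he hf (ne_of_apply_ne _ hne)
      hxe hxf).1

end Units

section Adjusters

open Finset SimpleGraph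

variable {V ι κ : Type*} {G : SimpleGraph V} {m D H N M : ℕ} [DecidableEq V] {W : Finset V}

theorem DetourIn.exists_adjusterIn (g : DetourIn G m D) {d z : ℝ} {n l : ℕ} (hz : 1 ≤ z)
    (hz' : z ≤ 3) (hl : m ≤ l)
    {U : Bool → UnitIn G ⌈z * √d * (n : ℝ) ^ 6⌉₊ ⌈√d * (n : ℝ) ^ 22⌉₊ (10 * n)}
    (hcore : ∀ b, (U b).core = (g.star b).centre)
    (hint : Disjoint (U false).interior (U true).interior)
    (hU : ∀ b, Disjoint (U b).verts g.inner) :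
    ∃ P : AdjusterIn G d n l 1, P.z = z ∧
      P.verts = (g.inner : Set V) ∪ (U false).verts ∪ (U true).verts ∧ P.A.ncard ≤ 2 * P.len := by
  have hcard : (g.inner : Set V).ncard ≤ 2 * g.len :=
    (Set.ncard_coe_finset _).trans_le g.card_inner_le
  have hinner : Disjoint (g.inner : Set V) ((U false).verts ∪ (U true).verts) :=
    Set.disjoint_union_right.2 ⟨(hU false).symm, (hU true).symm⟩
  refine ⟨⟨z, hz, hz', U false, U true, hint.inter_eq, g.inner,
    hcard.trans (Nat.mul_le_mul_left 2 (g.len_le.trans hl)), hinner.inter_eq, g.len,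
    g.len_le.trans hl, fun i => (g.path i).copy (hcore false).symm (hcore true).symm,
    fun i => (Walk.isPath_copy ..).2 (g.path_isPath i),
    fun i => (Walk.length_copy ..).trans (g.path_length i), fun i x hx => ?_⟩, rfl, rfl,
    hcard.trans (Nat.mul_le_mul_left 2 (Nat.le_add_right ..))⟩
  rw [Walk.support_copy] at hx
  rw [hcore, hcore]
  exact g.path_support i x hx

theorem RobustlyDense.exists_detours_and_stars [Fintype V] [DecidableRel G.Adj] {B δ k : ℕ}
    (h : RobustlyDense G B δ) (hG : _root_.IsBipartite G) (hk : k + m ≤ δ)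
    (hD : 2 * D + 2 * m ≤ δ) (hV : Fintype.card V < k ^ m) (hH : H ≤ δ)
    (hW : #W + N * (2 * D + 2 * m + 2) + M * (H + 1) ≤ B) :
    ∃ (g : Fin N → DetourIn G m D) (S : Fin M → StarIn G H),
      (Pairwise fun i j => Disjoint (g i).verts (g j).verts) ∧
      (Pairwise fun i j => Disjoint (S i).verts (S j).verts) ∧
      (∀ i j, Disjoint (g i).verts (S j).verts) ∧
      (∀ i, Disjoint (g i).verts W) ∧ ∀ j, Disjoint (S j).verts W := by
  obtain ⟨g, hgW, hg⟩ := exists_pairwise_disjoint_of_forall_exists_disjoint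
    (fun g : DetourIn G m D => g.card_verts_le) (fun _ => h.exists_detour hG hk hD hV) N
    ((Nat.le_add_right ..).trans hW)
  have hWg : #(W ∪ univ.biUnion fun i => (g i).verts) ≤ #W + N * (2 * D + 2 * m + 2) := by
    refine (card_union_le ..).trans (Nat.add_le_add_left ?_ _)
    exact (card_biUnion_le_card_mul _ _ _ fun i _ => (g i).card_verts_le).trans_eq (by simp)
  obtain ⟨S, hSW, hS⟩ := exists_pairwise_disjoint_of_forall_exists_disjoint
    (fun S : StarIn G H => S.card_verts_le) (fun _ => h.exists_star hH) M
    ((Nat.add_le_add_right hWg _).trans hW)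
  simp only [disjoint_union_right, disjoint_biUnion_right] at hSW
  exact ⟨g, S, hg, hS, fun i j => ((hSW j).2 i (mem_univ i)).symm, hgW, fun j => (hSW j).1⟩

theorem DetourIn.pairwise_disjoint_star {g : ι → DetourIn G m D}
    (hg : Pairwise fun i j => Disjoint (g i).verts (g j).verts) :
    Pairwise fun p q : ι × Bool => Disjoint ((g p.1).star p.2).verts ((g q.1).star q.2).verts := by
  rintro ⟨i, b⟩ ⟨j, c⟩ hne
  obtain rfl | hij := eq_or_ne i j
  · cases b <;> cases c
    exacts [absurd rfl hne, (g i).disjoint_star, (g i).disjoint_star.symm, absurd rfl hne]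
  · exact (hg hij).mono ((g i).star_verts_subset b) ((g j).star_verts_subset c)

theorem DetourIn.disjoint_star_inner {g : ι → DetourIn G m D}
    (hg : Pairwise fun i j => Disjoint (g i).verts (g j).verts) (i j : ι) (b : Bool) :
    Disjoint ((g i).star b).verts (g j).inner := by
  obtain rfl | hij := eq_or_ne i j
  · exact (g i).disjoint_inner b
  · exact (hg hij).mono ((g i).star_verts_subset b) subset_union_right

theorem exists_mk_mem_of_card_compl_lt [Fintype ι] [DecidableEq ι] {I : Finset (ι × Bool)}
    (hI : #Iᶜ < Fintype.card ι) : ∃ i, ∀ b, (i, b) ∈ I := by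
  by_contra! h
  choose b hb using h
  refine hI.not_ge (card_le_card_of_injOn (s := univ) (fun i => (i, b i)) (by simp [hb]) ?_)
  exact fun i _ j _ hij => congrArg Prod.fst hij

theorem ConnectsLargeSets.exists_adjusterIn [Fintype ι] [Fintype κ] {E ζ r T n l : ℕ} {d z : ℝ}
    (hG : ConnectsLargeSets G E ζ r) {g : ι → DetourIn G m D} {S : κ → StarIn G H}
    (hg : Pairwise fun i j => Disjoint (g i).verts (g j).verts)
    (hS : Pairwise fun i j => Disjoint (S i).verts (S j).verts)
    (hgS : ∀ i j, Disjoint (g i).verts (S j).verts) (hgW : ∀ i, Disjoint (g i).verts W)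
    (hSW : ∀ j, Disjoint (S j).verts W)
    (hζ : #W + Fintype.card ι * (2 * m) + Fintype.card ι * 2 + Fintype.card κ +
      Fintype.card ι * 2 * T * (r + 3) ≤ ζ)
    (hE : E ≤ (Fintype.card κ - Fintype.card ι * 2 * T) * H) (hED : E ≤ Fintype.card ι * D)
    (hz : 1 ≤ z) (hz' : z ≤ 3) (hl : m ≤ l) (hr : r + 2 < 10 * n) (hd : 0 < z * √d * (n : ℝ) ^ 6)
    (hT : (r + 3) * ⌈z * √d * (n : ℝ) ^ 6⌉₊ ≤ T)
    (hH : ⌈√d * (n : ℝ) ^ 22⌉₊ + ⌈z * √d * (n : ℝ) ^ 6⌉₊ * (r + 3) ≤ H) :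
    ∃ P : AdjusterIn G d n l 1, P.z = z ∧ Disjoint P.verts W ∧ P.A.ncard ≤ 2 * P.len := by
  classical
  let Z : Finset V := W ∪ univ.biUnion fun i => (g i).inner
  have hZ : #Z ≤ #W + Fintype.card ι * (2 * m) := by
    refine (card_union_le ..).trans (Nat.add_le_add_left ?_ _)
    exact card_biUnion_le_card_mul _ _ _ fun i _ =>
      (g i).card_inner_le.trans (Nat.mul_le_mul_left 2 (g i).len_le)
  have hcard : Fintype.card (ι × Bool) = Fintype.card ι * 2 := by simp
  have hCZ : ∀ p : ι × Bool, Disjoint ((g p.1).star p.2).verts Z := fun p =>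
    disjoint_union_right.2 ⟨(hgW p.1).mono_left ((g p.1).star_verts_subset p.2),
      (disjoint_biUnion_right ..).2 fun j _ => DetourIn.disjoint_star_inner hg p.1 j p.2⟩
  have hSZ : ∀ j, Disjoint (S j).verts Z := fun j =>
    disjoint_union_right.2 ⟨hSW j, (disjoint_biUnion_right ..).2 fun i _ =>
      (hgS i j).symm.mono_right subset_union_right⟩
  obtain ⟨I, U, hI, hU, hUd⟩ := hG.exists_unitIn (DetourIn.pairwise_disjoint_star hg) hS
    (fun p j => (hgS p.1 j).mono_left ((g p.1).star_verts_subset p.2)) hCZ hSZ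
    (by rw [hcard]; lia) (by rwa [hcard]) (Nat.ceil_pos.2 hd) hr hT hH
  obtain ⟨i, hi⟩ := exists_mk_mem_of_card_compl_lt (lt_of_mul_lt_mul_right' (hI.trans_le hED))
  have hUZ : ∀ b, Disjoint (U ⟨_, hi b⟩).verts (g i).inner ∧ Disjoint (U ⟨_, hi b⟩).verts W :=
    fun b => Set.disjoint_union_right.1 <| (hU _).2.mono_right <| by
      rw [← coe_union, coe_subset, union_comm]
      exact union_subset_union_right (subset_biUnion_of_mem (fun i => (g i).inner) (mem_univ i))
  obtain ⟨P, hPz, hPv, hP⟩ := (g i).exists_adjusterIn hz hz' hl (U := fun b => U ⟨_, hi b⟩)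
    (fun b => (hU ⟨_, hi b⟩).1) (hUd (by simp)) fun b => (hUZ b).1
  refine ⟨P, hPz, ?_, hP⟩
  rw [hPv, Set.disjoint_union_left, Set.disjoint_union_left, disjoint_coe]
  exact ⟨⟨(hgW i).mono_left subset_union_right, (hUZ _).2⟩, (hUZ _).2⟩

end Adjusters

section Parameters

open Finset SimpleGraph

variable {V : Type*} {G : SimpleGraph V} {s m t D : ℕ}

theorem mul_mul_pow_le_mul_pow {c a b : ℕ} (hc : c ≤ m) (hm : 0 < m) (hab : a < b) (x : ℕ) :
    c * (x * m ^ a) ≤ x * m ^ b := calc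
  c * (x * m ^ a) ≤ m * (x * m ^ a) := Nat.mul_le_mul_right _ hc
  _ = x * m ^ (a + 1) := by ring
  _ ≤ x * m ^ b := Nat.mul_le_mul_left _ (Nat.pow_le_pow_right hm hab)

theorem mul_pow_le_sq (hm : 0 < m) (hs : m ^ 100 ≤ s) {a : ℕ} (ha : a ≤ 100) :
    s * m ^ a ≤ s ^ 2 :=
  (Nat.mul_le_mul_left s ((Nat.pow_le_pow_right hm ha).trans hs)).trans_eq (sq s).symm

theorem pow_succ_mul_pow_pow_le_pow (hm : 2 ≤ m) (hs : m ^ 100 ≤ s) (ht : t ≤ s * m)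
    (hD : s ^ 2 ≤ m * D) : ((t + 1) * m ^ 61) ^ 6 ≤ D ^ 5 := by
  have hs0 : 0 < s := (by positivity : 0 < m ^ 100).trans_le hs
  have ht' : t + 1 ≤ s * m ^ 2 := by nlinarith
  refine le_of_mul_le_mul_left (a := m ^ 5) ?_ (by positivity)
  calc m ^ 5 * ((t + 1) * m ^ 61) ^ 6 ≤ m ^ 5 * (s * m ^ 2 * m ^ 61) ^ 6 := by gcongr
    _ = s ^ 6 * m ^ 383 := by ring
    _ ≤ s ^ 6 * (m ^ 100) ^ 4 := by rw [← pow_mul]; gcongr <;> lia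
    _ ≤ s ^ 6 * s ^ 4 := by gcongr
    _ = (s ^ 2) ^ 5 := by ring
    _ ≤ (m * D) ^ 5 := by gcongr
    _ = m ^ 5 * D ^ 5 := mul_pow ..

theorem robustlyDense_of_not_hasTK_of_pow_le [Fintype V] [DecidableRel G.Adj] (hm : 7 < m)
    (hs : m ^ 100 ≤ s) (hTK : ¬ HasTK G t 1) (ht : t ≤ s * m) (hdeg : ∀ v, 32 * D ≤ G.degree v)
    (hD : s ^ 2 ≤ 128 * D) (hV : s ^ 2 * m ^ 1000 ≤ Fintype.card V) :
    RobustlyDense G (s ^ 2 * m ^ 60) (4 * D) := by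
  have hm0 : 0 < m := pos_of_gt hm
  have hs0 : 0 < s := (Nat.pow_pos hm0).trans_le hs
  have hD0 : 0 < D := by nlinarith
  have hsD : s ^ 2 ≤ m * (4 * (4 * D)) := hD.trans (by nlinarith)
  have hV' : ∀ {a}, a < 1000 → 4 * (s ^ 2 * m ^ a) ≤ Fintype.card V := fun ha =>
    (mul_mul_pow_le_mul_pow (by linarith) hm0 ha _).trans hV
  refine robustlyDense_of_not_hasTK (b := m ^ 61) (q := 6) hTK (Nat.one_lt_pow (by simp)
    (by linarith)) (by simp) (by positivity) (fun v => by linarith [hdeg v]) ?_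
    (pow_succ_mul_pow_pow_le_pow (by linarith) hs ht hsD) (hV' (by simp)) ?_
  · calc s ^ 2 * m ^ 60 ≤ m * (4 * (4 * D)) * m ^ 60 := Nat.mul_le_mul_right _ hsD
      _ = m ^ 61 * (4 * (4 * D)) := by ring
  · calc 4 * (t ^ 2 * (m ^ 61) ^ (2 * 6)) ≤ 4 * ((s * m) ^ 2 * (m ^ 61) ^ (2 * 6)) := by gcongr
      _ = 4 * (s ^ 2 * m ^ 734) := by ring
      _ ≤ Fintype.card V := hV' (by simp)

theorem RobustlyDense.exists_detours_and_stars_of_pow_le [Fintype V] [DecidableEq V]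
    [DecidableRel G.Adj] {W : Finset V} (h : RobustlyDense G (s ^ 2 * m ^ 60) (4 * D))
    (hG : _root_.IsBipartite G) (hm : 64 ≤ m) (hs : m ^ 100 ≤ s) (hDs : 64 * D ≤ s ^ 2)
    (hD : s ^ 2 ≤ 128 * D) (hV : Fintype.card V < s ^ m) (hW : #W ≤ s ^ 2 * m ^ 11) :
    ∃ (g : Fin (m ^ 16) → DetourIn G m D) (S : Fin (s * m ^ 25) → StarIn G (s * m ^ 23)),
      (Pairwise fun i j => Disjoint (g i).verts (g j).verts) ∧
      (Pairwise fun i j => Disjoint (S i).verts (S j).verts) ∧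
      (∀ i j, Disjoint (g i).verts (S j).verts) ∧
      (∀ i, Disjoint (g i).verts W) ∧ ∀ j, Disjoint (S j).verts W := by
  have hm0 : 0 < m := by lia
  have hs0 : 0 < s := (Nat.pow_pos hm0).trans_le hs
  have hDx : ∀ {x}, 64 * x ≤ s ^ 2 → x ≤ 2 * D := fun hx => by lia
  have hS : s * m ^ 23 ≤ 2 * D := hDx <| (mul_mul_pow_le_mul_pow hm hm0 (by simp) s).trans
    (mul_pow_le_sq hm0 hs (a := 24) (by simp))
  have hms : s * m ≤ s * m ^ 23 := Nat.mul_le_mul_left s (Nat.le_self_pow (by simp) m)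
  refine h.exists_detours_and_stars hG (k := s) (by nlinarith) (by nlinarith) hV (by lia) ?_
  have hpow : ∀ {a}, a ≤ 58 → s ^ 2 * m ^ a ≤ s ^ 2 * m ^ 58 := fun ha => by gcongr
  have hg : m ^ 16 * (2 * D + 2 * m + 2) ≤ s ^ 2 * m ^ 58 :=
    (Nat.mul_le_mul_left _ (by nlinarith)).trans ((mul_comm ..).trans_le (hpow (by simp)))
  have hS : s * m ^ 25 * (s * m ^ 23 + 1) ≤ s ^ 2 * m ^ 58 := calc
    s * m ^ 25 * (s * m ^ 23 + 1) ≤ s * m ^ 25 * (s * m ^ 24) := by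
      gcongr
      have hpos : 0 < s * m ^ 23 := by positivity
      linarith [mul_mul_pow_le_mul_pow hm hm0 (by simp : 23 < 24) s]
    _ = s ^ 2 * m ^ 49 := by ring
    _ ≤ s ^ 2 * m ^ 58 := hpow (by simp)
  calc #W + m ^ 16 * (2 * D + 2 * m + 2) + s * m ^ 25 * (s * m ^ 23 + 1)
      ≤ s ^ 2 * m ^ 58 + s ^ 2 * m ^ 58 + s ^ 2 * m ^ 58 := by
        gcongr; exact hW.trans (hpow (by simp))
    _ = 3 * (s ^ 2 * m ^ 58) := by ring
    _ ≤ s ^ 2 * m ^ 60 := mul_mul_pow_le_mul_pow (by lia) hm0 (by simp) _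

theorem add_pow_mul_le_sq_mul_pow (hm : 64 ≤ m) (hs : m ^ 100 ≤ s) {w : ℕ}
    (hw : w ≤ s ^ 2 * m ^ 11) :
    w + m ^ 16 * (2 * m) + m ^ 16 * 2 + s * m ^ 25 + m ^ 16 * 2 * (s * m ^ 8) * (2 * m + 3) ≤
      s ^ 2 * m ^ 12 := by
  have hm0 : 0 < m := by lia
  have hlow : ∀ {x a}, a ≤ 100 → x ≤ s * m ^ a → x ≤ s ^ 2 * m ^ 11 := fun ha hx =>
    (hx.trans (mul_pow_le_sq hm0 hs ha)).trans (Nat.le_mul_of_pos_right _ (by positivity))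
  have hs0 : 0 < s := (Nat.pow_pos hm0).trans_le hs
  have h₁ : m ^ 16 * (2 * m) ≤ s ^ 2 * m ^ 11 := hlow (a := 18) (by simp) <| calc
    m ^ 16 * (2 * m) = 2 * (1 * m ^ 17) := by ring
    _ ≤ 1 * m ^ 18 := mul_mul_pow_le_mul_pow (by lia) hm0 (by simp) 1
    _ ≤ s * m ^ 18 := Nat.mul_le_mul_right _ hs0
  have h₂ : m ^ 16 * 2 ≤ s ^ 2 * m ^ 11 := (Nat.mul_le_mul_left _ (by lia)).trans h₁
  have h₃ : m ^ 16 * 2 * (s * m ^ 8) * (2 * m + 3) ≤ s ^ 2 * m ^ 11 := hlow (a := 26) (by simp) <|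
    calc m ^ 16 * 2 * (s * m ^ 8) * (2 * m + 3) ≤ m ^ 16 * 2 * (s * m ^ 8) * (3 * m) := by
          gcongr; lia
      _ = 6 * (s * m ^ 25) := by ring
      _ ≤ s * m ^ 26 := mul_mul_pow_le_mul_pow (by lia) hm0 (by simp) s
  calc _ ≤ 5 * (s ^ 2 * m ^ 11) := by linarith [hlow (x := s * m ^ 25) (by simp) le_rfl]
    _ ≤ s ^ 2 * m ^ 12 := mul_mul_pow_le_mul_pow (by lia) hm0 (by simp) _

theorem sq_mul_pow_le_sub_mul (hm : 3 ≤ m) :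
    s ^ 2 * m ^ 14 ≤ (s * m ^ 25 - m ^ 16 * 2 * (s * m ^ 8)) * (s * m ^ 23) := by
  have h : s * m ^ 24 ≤ s * m ^ 25 - m ^ 16 * 2 * (s * m ^ 8) := Nat.le_sub_of_add_le <| calc
    s * m ^ 24 + m ^ 16 * 2 * (s * m ^ 8) = 3 * (s * m ^ 24) := by ring
    _ ≤ s * m ^ 25 := mul_mul_pow_le_mul_pow hm (by lia) (by simp) s
  calc s ^ 2 * m ^ 14 ≤ s ^ 2 * m ^ 47 := by gcongr <;> lia
    _ = s * m ^ 24 * (s * m ^ 23) := by ring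
    _ ≤ _ := Nat.mul_le_mul_right _ h

theorem sq_mul_pow_le_pow_mul (hm : 64 ≤ m) (hD : s ^ 2 ≤ 128 * D) :
    s ^ 2 * m ^ 14 ≤ m ^ 16 * D := by
  calc s ^ 2 * m ^ 14 ≤ 128 * D * m ^ 14 := Nat.mul_le_mul_right _ hD
    _ = 64 * (2 * D * m ^ 14) := by ring
    _ ≤ 2 * D * m ^ 15 := mul_mul_pow_le_mul_pow hm (by lia) (by simp) _
    _ = 2 * (D * m ^ 15) := by ring
    _ ≤ D * m ^ 16 := mul_mul_pow_le_mul_pow (by lia) (by lia) (by simp) _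
    _ = m ^ 16 * D := mul_comm ..

theorem ConnectsLargeSets.exists_adjusterIn_of_pow_le [Fintype V]
    [DecidableRel G.Adj] {d : ℝ} {W : Finset V}
    (hG : ConnectsLargeSets G (s ^ 2 * m ^ 14) (s ^ 2 * m ^ 12) (2 * m))
    (hdense : RobustlyDense G (s ^ 2 * m ^ 60) (4 * D)) (hbip : _root_.IsBipartite G)
    (hm : 64 ≤ m) (hs : m ^ 100 ≤ s) (hDs : 64 * D ≤ s ^ 2) (hD : s ^ 2 ≤ 128 * D) (hd : 0 < √d)
    (hds : √d ≤ s) (hV : Fintype.card V < s ^ m) (hW : #W ≤ s ^ 2 * m ^ 11) :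
    ∃ P : AdjusterIn G d m (50 * m) 1, P.z = 3 ∧ Disjoint P.verts W ∧ P.A.ncard ≤ 2 * P.len := by
  classical
  obtain ⟨g, S, hg, hS, hgS, hgW, hSW⟩ :=
    hdense.exists_detours_and_stars_of_pow_le hbip hm hs hDs hD hV hW
  have hm0 : 0 < m := by lia
  have h₆ : (2 * m + 3) * ⌈3 * √d * (m : ℝ) ^ 6⌉₊ ≤ s * m ^ 8 := calc
    _ ≤ 3 * m * (3 * s * m ^ 6) :=
      Nat.mul_le_mul (by lia) (Nat.ceil_le.2 (by push_cast; gcongr))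
    _ = 9 * (s * m ^ 7) := by ring
    _ ≤ s * m ^ 8 := mul_mul_pow_le_mul_pow (by lia) hm0 (by simp) s
  have h₂₂ : ⌈√d * (m : ℝ) ^ 22⌉₊ ≤ s * m ^ 22 := Nat.ceil_le.2 (by push_cast; gcongr)
  have hH : ⌈√d * (m : ℝ) ^ 22⌉₊ + ⌈3 * √d * (m : ℝ) ^ 6⌉₊ * (2 * m + 3) ≤ s * m ^ 23 := calc
    _ ≤ s * m ^ 22 + s * m ^ 22 := by
      rw [mul_comm ⌈3 * √d * (m : ℝ) ^ 6⌉₊]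
      exact Nat.add_le_add h₂₂ (h₆.trans (by gcongr; lia))
    _ = 2 * (s * m ^ 22) := by ring
    _ ≤ s * m ^ 23 := mul_mul_pow_le_mul_pow (by lia) hm0 (by simp) s
  exact hG.exists_adjusterIn hg hS hgS hgW hSW (by simpa using add_pow_mul_le_sq_mul_pow hm hs hW)
    (by simpa using sq_mul_pow_le_sub_mul (by lia)) (by simpa using sq_mul_pow_le_pow_mul hm hD)
    (by simp) le_rfl (by lia) (by lia) (by positivity) h₆ hH

end Parameters

section VertexExpansion

open Finset

variable {V : Type*} {G : SimpleGraph V} {ε₁ k l x : ℝ}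

/-- The consequence of `IsExpander` in which no edges are deleted. -/
def IsVertexExpander (G : SimpleGraph V) (ε₁ k : ℝ) : Prop :=
  ∀ X : Set V, k / 2 ≤ X.ncard → (X.ncard : ℝ) ≤ Nat.card V / 2 →
    epsFun ε₁ k X.ncard * X.ncard ≤ (extNbr G X).ncard

theorem epsFun_nonneg (h₁ : 0 ≤ ε₁) : 0 ≤ epsFun ε₁ k x := by
  unfold epsFun
  split_ifs <;> positivity

theorem avgDeg_nonneg (G : SimpleGraph V) : 0 ≤ avgDeg G :=
  div_nonneg (finsum_nonneg fun _ => Nat.cast_nonneg _) (Nat.cast_nonneg _)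

theorem IsExpander.isVertexExpander (hG : IsExpander G ε₁ k) (h₁ : 0 ≤ ε₁) :
    IsVertexExpander G ε₁ k := fun X hkX hX => by
  have hbound : 0 ≤ avgDeg G * epsFun ε₁ k X.ncard * X.ncard :=
    mul_nonneg (mul_nonneg (avgDeg_nonneg G) (epsFun_nonneg h₁)) (Nat.cast_nonneg _)
  simpa using hG X hkX hX ⊥ bot_le (by simpa using hbound)

theorem div_sq_le_epsFun (h₁ : 0 ≤ ε₁) (hk : 0 < k) (hkx : k / 2 ≤ x)
    (hx : 15 * x ≤ k * Real.exp l) : ε₁ / l ^ 2 ≤ epsFun ε₁ k x := by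
  have hone : 1 < 15 * x / k := by rw [lt_div_iff₀ hk]; linarith
  have hlog : Real.log (15 * x / k) ≤ l := by
    rwa [Real.log_le_iff_le_exp (by linarith), div_le_iff₀' hk]
  have hpos : 0 < Real.log (15 * x / k) := Real.log_pos hone
  rw [epsFun, if_neg (by linarith)]
  gcongr

theorem IsVertexExpander.expandsAbove [Fintype V] (hG : IsVertexExpander G ε₁ k) (h₁ : 0 ≤ ε₁)
    (hk : 0 < k) {a : ℕ} (ha : k ≤ 2 * a) (hV : 15 * Fintype.card V ≤ 2 * (k * Real.exp l)) :
    ExpandsAbove G a (ε₁ / l ^ 2) := by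
  intro X haX hX
  have haX' : (a : ℝ) ≤ #X := mod_cast haX
  have hX' : 2 * (#X : ℝ) ≤ Fintype.card V := mod_cast hX
  have hkX : k / 2 ≤ #X := by linarith
  have hexp := hG X (by rwa [Set.ncard_coe_finset])
    (by rw [Set.ncard_coe_finset, Nat.card_eq_fintype_card]; linarith)
  rw [Set.ncard_coe_finset] at hexp
  refine le_trans ?_ hexp
  gcongr
  exact div_sq_le_epsFun h₁ hk hkX (by linarith)

theorem exp_half_le_one_add {y : ℝ} (h₀ : 0 ≤ y) (h₁ : y ≤ 1) : Real.exp (y / 2) ≤ 1 + y := by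
  have hinv : 1 - y / 2 ≤ (Real.exp (y / 2))⁻¹ := by
    rw [← Real.exp_neg]
    linarith [Real.add_one_le_exp (-(y / 2))]
  calc Real.exp (y / 2) ≤ (1 - y / 2)⁻¹ := le_inv_of_le_inv₀ (by linarith) hinv
    _ ≤ 1 + y := inv_le_of_inv_le₀ (by linarith) <| by
      rw [inv_le_comm₀ (by linarith) (by linarith), inv_eq_one_div, div_le_iff₀ (by linarith)]
      nlinarith

theorem exp_le_one_add_pow {y : ℝ} {m : ℕ} (h₀ : 0 ≤ y) (h₁ : y ≤ 1) (hx : 2 * x ≤ m * y) :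
    Real.exp x ≤ (1 + y) ^ m := calc
  Real.exp x ≤ Real.exp (m * (y / 2)) := Real.exp_le_exp.2 (by linarith)
  _ = Real.exp (y / 2) ^ m := Real.exp_nat_mul _ _
  _ ≤ (1 + y) ^ m := pow_le_pow_left₀ (Real.exp_nonneg _) (exp_half_le_one_add h₀ h₁) m

end VertexExpansion

section LargeParameters

open Finset

variable {V : Type*} {G : SimpleGraph V} {ε₁ ε₂ d L : ℝ} {n m s : ℕ}

/-- The lower bounds on `L = log (n / d)` under which the construction works. -/
structure IsLarge (ε₁ ε₂ L : ℝ) : Prop where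
  le : 64 ≤ L
  le_left : ε₁ ≤ L
  le_right : ε₂ ≤ L
  le_left_mul : 64 ≤ ε₁ * L
  le_right_mul : 8 ≤ ε₂ * L
  pow_le_exp : 2 * (L ^ 4) ^ 1000 ≤ Real.exp L

theorem eventually_isLarge (h₁ : 0 < ε₁) (h₂ : 0 < ε₂) :
    ∀ᶠ L in Filter.atTop, IsLarge ε₁ ε₂ L := by
  filter_upwards [Filter.eventually_ge_atTop 64, Filter.eventually_ge_atTop ε₁,
    Filter.eventually_ge_atTop ε₂, Filter.eventually_ge_atTop (64 / ε₁),
    Filter.eventually_ge_atTop (8 / ε₂),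
    (Real.tendsto_exp_div_pow_atTop 4000).eventually_ge_atTop 2] with L h₀ h₁L h₂L h₃ h₄ h₅
  rw [le_div_iff₀ (by positivity)] at h₅
  exact ⟨h₀, h₁L, h₂L, (div_le_iff₀' h₁).1 h₃, (div_le_iff₀' h₂).1 h₄, by rwa [← pow_mul]⟩

theorem IsLarge.floor_bounds (h : IsLarge ε₁ ε₂ L) :
    L ^ 4 ≤ 2 * ⌊L ^ 4⌋₊ ∧ 2 * L + 3 ≤ ⌊L ^ 4⌋₊ := by
  have hL := h.le
  have hfloor := Nat.lt_floor_add_one (L ^ 4)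
  have hL4 : 64 * L ≤ L ^ 4 := calc
    64 * L ≤ L ^ 3 * L := by gcongr; nlinarith [sq_nonneg L]
    _ = L ^ 4 := by ring
  constructor <;> linarith

theorem IsLarge.fifteen_mul_le (h : IsLarge ε₁ ε₂ L) (h₂ : 0 < ε₂) (hd : 0 < d) :
    15 * (d * Real.exp L) ≤ 2 * (ε₂ * d * Real.exp (2 * L)) := by
  have hexp : 8 ≤ ε₂ * Real.exp L := h.le_right_mul.trans <|
    mul_le_mul_of_nonneg_left (by linarith [Real.add_one_le_exp L]) h₂.le
  calc 15 * (d * Real.exp L) ≤ 2 * (8 * (d * Real.exp L)) := by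
        linarith [mul_pos hd (Real.exp_pos L)]
    _ ≤ 2 * (ε₂ * Real.exp L * (d * Real.exp L)) := by gcongr
    _ = 2 * (ε₂ * d * Real.exp (2 * L)) := by rw [two_mul L, Real.exp_add]; ring

theorem IsLarge.connectsLargeSets [Fintype V] (h : IsLarge ε₁ ε₂ L) (h₁ : 0 < ε₁) (h₂ : 0 < ε₂)
    (hG : IsVertexExpander G ε₁ (ε₂ * d)) (hd : 0 < d) (hn : Fintype.card V = d * Real.exp L)
    (hm : L ^ 4 ≤ 2 * m) (hLm : L ≤ m) (hds : d ≤ (s : ℝ) ^ 2) :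
    ConnectsLargeSets G (s ^ 2 * m ^ 14) (s ^ 2 * m ^ 12) (2 * m) := by
  have hL := h.le
  have hm2 : 2 ≤ m := by exact_mod_cast (by linarith : (2 : ℝ) ≤ m)
  have hs0 : 0 < s := Nat.pos_of_ne_zero (by rintro rfl; norm_num at hds; linarith)
  set ε := ε₁ / (8 * L ^ 2) with hε
  have hε0 : 0 ≤ ε := by positivity
  have hε1 : ε ≤ 1 := by rw [hε, div_le_one (by positivity)]; nlinarith [h.le_left]
  have hmε : 2 * L ≤ m * ε := calc
    2 * L ≤ ε₁ * L * L / 16 := by nlinarith [h.le_left_mul]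
    _ = L ^ 4 / 2 * ε := by rw [hε]; field_simp; norm_num
    _ ≤ m * ε := by gcongr; linarith
  have hexp : ExpandsAbove G (s ^ 2 * m) (2 * ε) := by
    rw [show 2 * ε = ε₁ / (2 * L) ^ 2 by rw [hε]; field_simp; norm_num]
    refine hG.expandsAbove h₁.le (by positivity) ?_ (hn ▸ h.fifteen_mul_le h₂ hd)
    push_cast
    nlinarith [h.le_right]
  have hgrowth : Fintype.card V ≤ (1 + ε) ^ m * (s ^ 2 * m : ℕ) := calc
    (Fintype.card V : ℝ) = Real.exp L * d := by rw [hn, mul_comm]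
    _ ≤ (1 + ε) ^ m * (s ^ 2 * m : ℕ) := by
      gcongr
      · exact exp_le_one_add_pow hε0 hε1 hmε
      · exact hds.trans (mod_cast Nat.le_mul_of_pos_right _ (by lia))
  have hE : s ^ 2 * m ^ 13 + s ^ 2 * m ^ 12 ≤ s ^ 2 * m ^ 14 := by
    have := mul_mul_pow_le_mul_pow hm2 (by lia) (by simp : 13 < 14) (s ^ 2)
    have : s ^ 2 * m ^ 12 ≤ s ^ 2 * m ^ 13 := by gcongr <;> lia
    lia
  refine hexp.connectsLargeSets hε0 (by positivity) hgrowth (hE.trans' ?_) ?_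
  · gcongr
    exact Nat.le_self_pow (by simp) m
  · calc ((s ^ 2 * m ^ 12 : ℕ) : ℝ) ≤ s ^ 2 * m ^ 12 * (m * ε) := by
          push_cast
          exact le_mul_of_one_le_right (by positivity) (by linarith)
      _ = ε * (s ^ 2 * m ^ 13 : ℕ) := by push_cast; ring
      _ ≤ ε * (s ^ 2 * m ^ 14 - s ^ 2 * m ^ 12 : ℕ) := by gcongr; lia

theorem sq_ceil_sqrt_le_two_mul (hd : 9 ≤ d) : (⌈√d⌉₊ : ℝ) ^ 2 ≤ 2 * d := by
  have hthree : 3 ≤ √d := Real.le_sqrt_of_sq_le (by linarith)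
  calc (⌈√d⌉₊ : ℝ) ^ 2 ≤ (√d + 1) ^ 2 := by
        gcongr; exact (Nat.ceil_lt_add_one (Real.sqrt_nonneg d)).le
    _ ≤ 2 * √d ^ 2 := by nlinarith
    _ = 2 * d := by rw [Real.sq_sqrt (by linarith)]

theorem pow_le_ceil_sqrt {a : ℕ} (h : (m : ℝ) ^ (a * 2) ≤ d) : m ^ a ≤ ⌈√d⌉₊ := by
  rw [pow_mul] at h
  exact_mod_cast (Real.le_sqrt_of_sq_le h).trans (Nat.le_ceil _)

theorem lt_pow_of_exp_le (hs : Real.exp 1 ≤ s) (hds : d ≤ (s : ℝ) ^ 2) (hm : L + 2 < m) (hL : 0 ≤ L)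
    (hn : n = d * Real.exp L) : n < s ^ m := by
  have hm2 : 2 ≤ m := by exact_mod_cast (by linarith : (2 : ℝ) ≤ m)
  have hs0 : (0 : ℝ) < s := (Real.exp_pos 1).trans_le hs
  rify
  calc (n : ℝ) ≤ s ^ 2 * Real.exp L := by rw [hn]; gcongr
    _ < s ^ 2 * Real.exp ((m - 2 : ℕ) * 1) := by
      gcongr
      push_cast [hm2]
      linarith
    _ = s ^ 2 * Real.exp 1 ^ (m - 2) := by rw [Real.exp_nat_mul]
    _ ≤ s ^ 2 * s ^ (m - 2) := by gcongr
    _ = s ^ m := by rw [← pow_add, Nat.add_sub_cancel' hm2]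

theorem IsLarge.mul_pow_le (h : IsLarge ε₁ ε₂ L) (hd : 0 ≤ d) (hm : m ≤ L ^ 4)
    (hs : (s : ℝ) ^ 2 ≤ 2 * d) (hn : n = d * Real.exp L) : s ^ 2 * m ^ 1000 ≤ n := by
  rify
  calc (s : ℝ) ^ 2 * m ^ 1000 ≤ 2 * d * (L ^ 4) ^ 1000 := by gcongr
    _ = d * (2 * (L ^ 4) ^ 1000) := by ring
    _ ≤ n := by rw [hn]; gcongr; exact h.pow_le_exp

theorem minDegGe.le_degree [Fintype V] [DecidableRel G.Adj] (h : minDegGe G d) (v : V) :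
    d ≤ G.degree v := by
  rw [← SimpleGraph.card_neighborFinset_eq_degree, SimpleGraph.neighborFinset_def,
    ← Set.ncard_eq_toFinset_card']
  exact h v

theorem exists_mul_le_le_mul {a : ℕ} (ha : 64 ≤ a) : ∃ D, 64 * D ≤ a ∧ a ≤ 128 * D :=
  ⟨a / 64, by lia, by lia⟩

theorem IsLarge.exists_adjusterIn [Fintype V] (h : IsLarge ε₁ ε₂ L) (h₁ : 0 < ε₁) (h₂ : 0 < ε₂)
    (hbip : IsBipartite G) (hG : IsVertexExpander G ε₁ (ε₂ * d)) (hdeg : minDegGe G d)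
    (hn : Fintype.card V = d * Real.exp L) (hm : m = ⌊L ^ 4⌋₊) (hmd : (m : ℝ) ^ 200 ≤ d)
    (hTK : ¬ HasTK G ⌈√d * m⌉₊ 1) {W : Finset V} (hW : #W ≤ d * (m : ℝ) ^ 11) :
    ∃ P : AdjusterIn G d m (50 * m) 1, P.z = 3 ∧ Disjoint P.verts W ∧ P.A.ncard ≤ 2 * P.len := by
  classical
  obtain ⟨hLm, hLm'⟩ := hm ▸ h.floor_bounds
  have hm64 : 64 ≤ m := by exact_mod_cast (by linarith [h.le] : (64 : ℝ) ≤ m)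
  have hs := pow_le_ceil_sqrt (a := 100) hmd
  have hds := Nat.le_ceil √d
  set s := ⌈√d⌉₊ with hsdef
  have hs64 : 64 ≤ s := hm64.trans ((Nat.le_self_pow (by simp) m).trans hs)
  have hsqrt : 0 < √d := Nat.ceil_pos.1 (hsdef ▸ pos_of_gt hs64)
  have hd : 0 < d := Real.sqrt_pos.1 hsqrt
  have hds2 : d ≤ (s : ℝ) ^ 2 := (Real.sqrt_le_left (by positivity)).1 hds
  have hsd : (s : ℝ) ^ 2 ≤ 2 * d := sq_ceil_sqrt_le_two_mul <| by
    linarith [h.le, le_self_pow₀ (by linarith [h.le] : (1 : ℝ) ≤ m) (by simp : 200 ≠ 0)]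
  obtain ⟨D, hDs, hD⟩ := exists_mul_le_le_mul (hs64.trans (Nat.le_self_pow two_ne_zero s))
  have hLm2 : L + 2 < m := by linarith [h.le]
  have hV' : Fintype.card V < s ^ m := lt_pow_of_exp_le
    (Real.exp_one_lt_three.le.trans (by exact_mod_cast hs64.trans' (by simp))) hds2
    hLm2 (by linarith [h.le]) hn
  have hdeg' : ∀ v, 32 * D ≤ G.degree v := fun v => by
    have : s ^ 2 ≤ 2 * G.degree v := by
      exact_mod_cast hsd.trans (mul_le_mul_of_nonneg_left (hdeg.le_degree v) zero_le_two)
    linarith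
  have hWs : #W ≤ s ^ 2 * m ^ 11 := by
    exact_mod_cast hW.trans (mul_le_mul_of_nonneg_right hds2 (by positivity))
  have hTs : ⌈√d * m⌉₊ ≤ s * m := Nat.ceil_le.2 (by push_cast; gcongr)
  have hdense := robustlyDense_of_not_hasTK_of_pow_le (hm64.trans_lt' (by simp)) hs hTK hTs hdeg'
    hD (h.mul_pow_le hd.le (hm ▸ Nat.floor_le (by positivity)) hsd hn)
  have hconn := h.connectsLargeSets h₁ h₂ hG hd hn hLm (by linarith [h.le]) hds2
  exact hconn.exists_adjusterIn_of_pow_le hdense hbip hm64 hs hDs hD hsqrt hds hV' hWs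

end LargeParameters

theorem statement_13_general {ε₁ ε₂ : ℝ} (h₁ : 0 < ε₁) (h₂ : 0 < ε₂) :
    ∃ K₀ : ℝ, ∀ K : ℝ, K₀ ≤ K →
      ∀ (V : Type*) [Finite V] (G : SimpleGraph V) (n : ℕ) (d : ℝ) (m : ℕ),
        Nat.card V = n → 0 < d → IsBipartite G → IsVertexExpander G ε₁ (ε₂ * d) →
        minDegGe G d → K * d ≤ n → m = ⌊Real.log (n / d) ^ 4⌋₊ → (m : ℝ) ^ 200 ≤ d →
        ¬ HasTK G ⌈√d * m⌉₊ 1 →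
        ∀ W : Set V, (W.ncard : ℝ) ≤ d * (m : ℝ) ^ 11 →
        ∃ P : AdjusterIn G d m (50 * m) 1,
          P.z = 3 ∧ (∀ x ∈ P.verts, x ∉ W) ∧ P.A.ncard ≤ 2 * P.len := by
  obtain ⟨L₀, hL₀⟩ := Filter.eventually_atTop.1 (eventually_isLarge h₁ h₂)
  refine ⟨Real.exp L₀, fun K hK V _ G n d m hn hd hbip hG hdeg hKn hm hmd hTK W hW => ?_⟩
  classical
  cases nonempty_fintype V
  have hnd : Real.exp L₀ ≤ n / d := hK.trans ((le_div_iff₀ hd).2 hKn)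
  have hnd0 : 0 < n / d := (Real.exp_pos _).trans_le hnd
  have hcard : (Fintype.card V : ℝ) = d * Real.exp (Real.log (n / d)) := by
    rw [← Nat.card_eq_fintype_card, hn, Real.exp_log hnd0, mul_div_cancel₀ _ hd.ne']
  rw [Set.ncard_eq_toFinset_card'] at hW
  obtain ⟨P, hz, hPW, hA⟩ := (hL₀ _ ((Real.le_log_iff_exp_le hnd0).2 hnd)).exists_adjusterIn h₁ h₂
    hbip hG hdeg hcard hm hmd hTK hW
  rw [Set.coe_toFinset] at hPW
  exact ⟨P, hz, fun _ hx => Set.disjoint_left.1 hPW hx, hA⟩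

theorem statement_13 (eps1 eps2 : Real)
    (heps1 : 0 < eps1) (heps1' : eps1 < 1) (heps2 : 0 < eps2) (heps2' : eps2 < 1) :
    ∃ K₀ : Real, ∀ K : Real, K₀ ≤ K →
      ∀ (V : Type) [Fintype V] (G : SimpleGraph V) (n : Nat) (d : Real) (m : Nat),
        Nat.card V = n → 0 < d → IsBipartite G → IsExpander G eps1 (eps2 * d) →
        minDegGe G d → K * d ≤ (n : Real) → m = ⌊Real.log ((n : Real) / d) ^ 4⌋₊ →
        (m : Real) ^ 200 ≤ d →
        ¬ HasTK G ⌈Real.sqrt d * (m : Real)⌉₊ 1 →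
        ∀ W : Set V, (W.ncard : Real) ≤ d * (m : Real) ^ 11 →
        ∃ P : AdjusterIn G d m (50 * m) 1,
          P.z = 3 ∧ (∀ x ∈ P.verts, x ∉ W) ∧ P.A.ncard ≤ 2 * P.len :=
  (statement_13_general heps1 heps2).imp fun _ h K hK V _ G n d m hn hd hbip hG =>
    h K hK V G n d m hn hd hbip (hG.isVertexExpander heps1.le)
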